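/- arXiv:1509.02098 — 4 statements merged into one kernel-verified Lean document; each statement's English description precedes it below -/
import Mathlib

section
/- Let Z ⊆ ℝ^N be an open set, let m ≥ 1, and let Q be the differential operator Qu = ∑_{|α|≤m} a_α(z) D^α u with coefficients a_α ∈ C^∞(Z;ℂ), where D = −i∂; let q(z,ζ) = ∑_{|α|=m} a_α(z) ζ^α (for ζ ∈ ℂ^N) be its principal symbol. Suppose there exist a real-valued smooth weight function φ on Z, a constant C > 0, τ₁ > 0, a multi-index α₀ with 0 ≤ |α₀| ≤ m, and δ ≥ 0 such that τ^{m−1−|α₀|+δ} ‖e^{τφ} D^{α₀} u‖_{L²} ≤ C ‖e^{τφ} Q u‖_{L²} for all τ ≥ τ₁ and all u ∈ C_c^∞(ℝ^N) with supp(u) ⊂ Z. If there exist z₀ ∈ Z, ζ₀ ∈ ℝ^N and τ₀ > 0 such that, setting θ₀ := ζ₀ + i τ₀ ∇φ(z₀) ∈ ℂ^N, one has θ₀^{α₀} ≠ 0, q(z₀, θ₀) = 0, and all first-order partial derivatives ∂_{z_j} q(z₀, θ₀) and ∂_{ζ_j} q(z₀, θ₀), 1 ≤ j ≤ N, vanish,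 then δ = 0. -/
open MeasureTheory

/-- Partial derivative in direction `j` of a complex-valued function on `ℝ^N`. -/
noncomputable def pderivC {N : ℕ} (j : Fin N) (f : (Fin N → ℝ) → ℂ) : (Fin N → ℝ) → ℂ :=
  fun z => fderiv ℝ f z (Pi.single j 1)

/-- Iterated multi-index partial derivative `∂^α`. -/
noncomputable def mderivC {N : ℕ} (α : Fin N → ℕ) (f : (Fin N → ℝ) → ℂ) : (Fin N → ℝ) → ℂ :=
  (List.finRange N).foldr (fun j g => (pderivC j)^[α j] g) f

/-- `D^α = (-i)^{|α|} ∂^α`. -/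
noncomputable def DopC {N : ℕ} (α : Fin N → ℕ) (f : (Fin N → ℝ) → ℂ) : (Fin N → ℝ) → ℂ :=
  fun z => (-Complex.I) ^ (∑ j, α j) * mderivC α f z

/-!
The estimate is tested on the wave packets `u_s(z) = e^{i s² θ₀·(z - z₀)} χ(s(z - z₀))` with
`τ = τ₀ s²` and `s → ∞`. Since `Im θ₀ = τ₀ ∇φ(z₀)`, the modulus of the plane wave cancels the linear
part of `τφ` at `z₀`, and the quadratic remainder is bounded on the support of `u_s`, a ball of
radius of order `1 / s`; there the weighted plane wave has modulus comparable to `e^{τφ(z₀)}`.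
Conjugation by the plane wave and rescaling turn `D` into `s²(θ₀ + s⁻¹D)`. So `D^{α₀} u_s` has size
`s^{2|α₀|}` near `z₀`, as `θ₀^{α₀} ≠ 0`, whereas `Q u_s` is only `O(s^{2m - 2})`: the terms
`q(z, θ₀) χ` and `s⁻¹ ∂_ζ q(z, θ₀)·Dχ` of the principal part are both `O(s⁻²)` for
`|z - z₀| = O(s⁻¹)`. As both norms are taken over balls of comparable volume, the estimate yields
`s^{2δ} = O(1)`.
-/

section

open Complex Filter Asymptotics Function Module
open scoped Topology ContDiff ENNReal NNReal

/-! ### Multi-index derivatives as words in `D_j` -/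

section Words

variable {N : ℕ}

/-- The first-order operator `D_j = -i∂_j`. -/
noncomputable def partialD (j : Fin N) (f : (Fin N → ℝ) → ℂ) : (Fin N → ℝ) → ℂ :=
  fun z => -I * pderivC j f z

/-- The multi-index `α` spelled out as a list of directions, `j` occurring `α j` times. Words make
the expansions of `D^α` below accessible to list induction. -/
def indexWord (α : Fin N → ℕ) : List (Fin N) :=
  (List.finRange N).flatMap fun j => List.replicate (α j) j

lemma foldr_replicate {A B : Type*} (f : A → B → B) (n : ℕ) (x : A) (b : B) :
    (List.replicate n x).foldr f b = (f x)^[n] b := by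
  induction n with
  | zero => rfl
  | succ n ih => rw [List.replicate_succ, List.foldr_cons, ih, iterate_succ_apply']

lemma length_indexWord (α : Fin N → ℕ) : (indexWord α).length = ∑ j, α j := by
  simp [indexWord, List.length_flatMap, Fin.sum_univ_def]

lemma prod_map_indexWord (α : Fin N → ℕ) (ζ : Fin N → ℂ) :
    ((indexWord α).map ζ).prod = ∏ j, ζ j ^ α j := by
  rw [indexWord, Fin.prod_univ_def]
  induction List.finRange N with
  | nil => rfl
  | cons j l ih => simp [ih]

lemma mderivC_eq_foldr (α : Fin N → ℕ) (f : (Fin N → ℝ) → ℂ) :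
    mderivC α f = (indexWord α).foldr pderivC f := by
  simp only [mderivC, indexWord, List.foldr_flatMap, foldr_replicate]

lemma partialD_smul (j : Fin N) (c : ℂ) (f : (Fin N → ℝ) → ℂ) :
    partialD j (c • f) = c • partialD j f := by
  ext z
  simp only [partialD, pderivC, fderiv_const_smul_field, Pi.smul_apply,
    smul_apply, smul_eq_mul]
  ring

lemma foldr_partialD_eq (w : List (Fin N)) (f : (Fin N → ℝ) → ℂ) :
    w.foldr partialD f = (-I) ^ w.length • w.foldr pderivC f := by
  induction w with
  | nil => simp
  | cons l w ih =>
    rw [List.foldr_cons, ih, partialD_smul, List.length_cons, pow_succ, mul_smul]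
    rfl

lemma DopC_eq_foldr (α : Fin N → ℕ) (f : (Fin N → ℝ) → ℂ) :
    DopC α f = (indexWord α).foldr partialD f := by
  rw [foldr_partialD_eq, length_indexWord, ← mderivC_eq_foldr]
  rfl

lemma tsupport_partialD_subset (j : Fin N) (f : (Fin N → ℝ) → ℂ) :
    tsupport (partialD j f) ⊆ tsupport f :=
  (tsupport_comp_subset (g := (-I * ·)) (mul_zero _) _).trans (tsupport_fderiv_apply_subset ℝ _)

lemma tsupport_DopC_subset (α : Fin N → ℕ) (f : (Fin N → ℝ) → ℂ) :
    tsupport (DopC α f) ⊆ tsupport f := by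
  rw [DopC_eq_foldr]
  induction indexWord α with
  | nil => rfl
  | cons l w ih => exact (tsupport_partialD_subset l _).trans ih

lemma partialD_add (j : Fin N) {f g : (Fin N → ℝ) → ℂ} (hf : Differentiable ℝ f)
    (hg : Differentiable ℝ g) : partialD j (f + g) = partialD j f + partialD j g := by
  ext z
  simp only [partialD, pderivC, fderiv_add (hf z) (hg z), Pi.add_apply,
    add_apply]
  ring

lemma partialD_sum {ι : Type*} (j : Fin N) (s : Finset ι) {f : ι → (Fin N → ℝ) → ℂ}
    (hf : ∀ i ∈ s, Differentiable ℝ (f i)) :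
    partialD j (∑ i ∈ s, f i) = ∑ i ∈ s, partialD j (f i) := by
  ext z
  simp only [partialD, pderivC, fderiv_sum fun i hi => hf i hi z, Finset.sum_apply,
    sum_apply, Finset.mul_sum]

lemma partialD_mul (j : Fin N) {f g : (Fin N → ℝ) → ℂ} (hf : Differentiable ℝ f)
    (hg : Differentiable ℝ g) : partialD j (f * g) = partialD j f * g + f * partialD j g := by
  ext z
  simp only [partialD, pderivC, fderiv_mul (hf z) (hg z), Pi.add_apply, Pi.mul_apply,
    add_apply, smul_apply, smul_eq_mul]
  ring

lemma partialD_comp_smul_sub (j : Fin N) (s : ℝ) (z₀ : Fin N → ℝ) {g : (Fin N → ℝ) → ℂ}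
    (hg : Differentiable ℝ g) :
    partialD j (fun z => g (s • (z - z₀))) = fun z => s * partialD j g (s • (z - z₀)) := by
  ext z
  have hinner : HasFDerivAt (fun z : Fin N → ℝ => s • (z - z₀))
      (s • ContinuousLinearMap.id ℝ (Fin N → ℝ)) z :=
    ((hasFDerivAt_id z).sub_const z₀).const_smul s
  have hcomp : HasFDerivAt (fun z => g (s • (z - z₀))) _ z := (hg _).hasFDerivAt.comp z hinner
  rw [partialD, pderivC, hcomp.fderiv]
  simp only [partialD, pderivC, ContinuousLinearMap.comp_apply, smul_apply,
    ContinuousLinearMap.id_apply, map_smul, real_smul]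
  ring

lemma contDiff_uncurry_partialD {P : Type*} [NormedAddCommGroup P] [NormedSpace ℝ P] (j : Fin N)
    {H : P → (Fin N → ℝ) → ℂ} (hH : ContDiff ℝ ∞ (uncurry H)) :
    ContDiff ℝ ∞ (uncurry fun ε => partialD j (H ε)) := by
  have hfderiv : ContDiff ℝ ∞ fun p : P × (Fin N → ℝ) => fderiv ℝ (H p.1) p.2 :=
    ContDiff.fderiv (f := fun p : P × (Fin N → ℝ) => H p.1) (m := ∞)
      (hH.comp ((contDiff_fst.comp contDiff_fst).prodMk contDiff_snd)) contDiff_snd (by simp)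
  exact contDiff_const.mul (hfderiv.clm_apply contDiff_const)

lemma contDiff_partialD (j : Fin N) {f : (Fin N → ℝ) → ℂ} (hf : ContDiff ℝ ∞ f) :
    ContDiff ℝ ∞ (partialD j f) :=
  contDiff_const.mul ((hf.fderiv_right (by simp)).clm_apply contDiff_const)

end Words

/-! ### The operators `(θ + εD)^α` -/

section ShiftedD

variable {N : ℕ}

/-- The operator `θ_j + ε D_j`, which is what `D_j` becomes after conjugation by a plane wave of
frequency `θ` and rescaling. -/
noncomputable def shiftedD (θ : Fin N → ℂ) (ε : ℝ) (j : Fin N) (g : (Fin N → ℝ) → ℂ) :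
    (Fin N → ℝ) → ℂ :=
  θ j • g + (ε : ℂ) • partialD j g

lemma contDiff_uncurry_foldr_shiftedD (θ : Fin N → ℂ) {χ : (Fin N → ℝ) → ℂ}
    (hχ : ContDiff ℝ ∞ χ) (w : List (Fin N)) :
    ContDiff ℝ ∞ (uncurry fun ε => w.foldr (shiftedD θ ε) χ) := by
  induction w with
  | nil => exact hχ.comp contDiff_snd
  | cons l w ih =>
    exact (contDiff_const.mul ih).add
      ((ofRealCLM.contDiff.comp contDiff_fst).mul (contDiff_uncurry_partialD l ih))

lemma contDiff_foldr_shiftedD (θ : Fin N → ℂ) (ε : ℝ) {χ : (Fin N → ℝ) → ℂ}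
    (hχ : ContDiff ℝ ∞ χ) (w : List (Fin N)) :
    ContDiff ℝ ∞ (w.foldr (shiftedD θ ε) χ) :=
  (contDiff_uncurry_foldr_shiftedD θ hχ w).comp (contDiff_prodMk_right ε)

lemma foldr_shiftedD_eventuallyEq_const (θ : Fin N → ℂ) (ε : ℝ) {χ : (Fin N → ℝ) → ℂ} {c : ℂ}
    {Y : Fin N → ℝ} (hχ : χ =ᶠ[𝓝 Y] fun _ => c) (w : List (Fin N)) :
    w.foldr (shiftedD θ ε) χ =ᶠ[𝓝 Y] fun _ => (w.map θ).prod * c := by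
  induction w with
  | nil => simpa using hχ
  | cons l w ih =>
    filter_upwards [ih, ih.fderiv (𝕜 := ℝ)] with y hy hfderiv
    simp [shiftedD, partialD, pderivC, hy, hfderiv, mul_assoc]

lemma differentiable_prod_map (w : List (Fin N)) :
    Differentiable ℂ fun ζ : Fin N → ℂ => (w.map ζ).prod := by
  induction w with
  | nil => simp
  | cons l w ih => simpa using (differentiable_apply l).fun_mul ih

lemma deriv_prod_map_update_cons (θ : Fin N → ℂ) (j l : Fin N) (w : List (Fin N)) :
    deriv (fun t => ((l :: w).map (update θ j t)).prod) (θ j) =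
      Pi.single (M := fun _ => ℂ) j 1 l * (w.map θ).prod +
        θ l * deriv (fun t => (w.map (update θ j t)).prod) (θ j) := by
  have hupdate : HasDerivAt (update θ j) (Pi.single j 1) (θ j) := hasDerivAt_update θ j (θ j)
  have htail : DifferentiableAt ℂ (fun t => (w.map (update θ j t)).prod) (θ j) :=
    (differentiable_prod_map w _).comp _ hupdate.differentiableAt
  have hcons := (hasDerivAt_pi.1 hupdate l).fun_mul htail.hasDerivAt
  simp only [update_eq_self] at hcons
  simpa only [List.map_cons, List.prod_cons] using hcons.deriv

lemma sum_deriv_prod_map_update_cons_smul {V : Type*} [AddCommGroup V] [Module ℂ V]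
    (θ : Fin N → ℂ) (l : Fin N) (w : List (Fin N)) (v : Fin N → V) :
    ∑ j, deriv (fun t => ((l :: w).map (update θ j t)).prod) (θ j) • v j =
      (w.map θ).prod • v l +
        θ l • ∑ j, deriv (fun t => (w.map (update θ j t)).prod) (θ j) • v j := by
  simp_rw [deriv_prod_map_update_cons, add_smul, Finset.sum_add_distrib, mul_smul,
    ← Finset.smul_sum]
  simp [Pi.single_apply]

-- In `θ_l + ε D_l` applied to `cχ + εB + ε²H`, the terms of order `ε²` and higher are
-- `ε²(θ_l H + D_l B + ε D_l H)`.
lemma exists_foldr_shiftedD_eq (θ : Fin N → ℂ) {χ : (Fin N → ℝ) → ℂ} (hχ : ContDiff ℝ ∞ χ)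
    (w : List (Fin N)) :
    ∃ H : ℝ → (Fin N → ℝ) → ℂ, ContDiff ℝ ∞ (uncurry H) ∧ ∀ ε : ℝ,
      w.foldr (shiftedD θ ε) χ = (w.map θ).prod • χ +
        (ε : ℂ) • ∑ j, deriv (fun t => (w.map (update θ j t)).prod) (θ j) • partialD j χ +
        (ε : ℂ) ^ 2 • H ε := by
  induction w with
  | nil => exact ⟨0, contDiff_const, fun ε => by simp⟩
  | cons l w ih =>
    obtain ⟨H, hH, hexpand⟩ := ih
    set b : Fin N → ℂ := fun j => deriv (fun t => (w.map (update θ j t)).prod) (θ j)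
    have hDχ (j : Fin N) : ContDiff ℝ ∞ (partialD j χ) := contDiff_partialD j hχ
    have hHε (ε : ℝ) : ContDiff ℝ ∞ (H ε) := hH.comp (contDiff_prodMk_right ε)
    refine ⟨fun ε => θ l • H ε + ∑ j, b j • partialD l (partialD j χ) +
      (ε : ℂ) • partialD l (H ε), ?_, fun ε => ?_⟩
    · have hsum : ContDiff ℝ ∞ (∑ j, b j • partialD l (partialD j χ)) := by
        rw [Finset.sum_fn]
        exact ContDiff.sum fun j _ => (contDiff_partialD l (hDχ j)).const_smul (b j)
      exact ((hH.const_smul (θ l)).add (hsum.comp contDiff_snd)).add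
        ((ofRealCLM.contDiff.comp contDiff_fst).mul (contDiff_uncurry_partialD l hH))
    · have hdiff {f : (Fin N → ℝ) → ℂ} (c : ℂ) (hf : ContDiff ℝ ∞ f) :
          Differentiable ℝ (c • f) := (hf.differentiable (by simp)).const_smul c
      have hdiff_sum : Differentiable ℝ (∑ j, b j • partialD j χ) :=
        Differentiable.sum fun j _ => hdiff (b j) (hDχ j)
      have hD : partialD l (w.foldr (shiftedD θ ε) χ) = (w.map θ).prod • partialD l χ +
          (ε : ℂ) • ∑ j, b j • partialD l (partialD j χ) + (ε : ℂ) ^ 2 • partialD l (H ε) := by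
        rw [hexpand, partialD_add l ((hdiff _ hχ).add (hdiff_sum.const_smul (ε : ℂ)))
          (hdiff _ (hHε ε)), partialD_add l (hdiff _ hχ) (hdiff_sum.const_smul (ε : ℂ)),
          partialD_smul, partialD_smul, partialD_smul,
          partialD_sum l _ fun j _ => hdiff (b j) (hDχ j)]
        simp only [partialD_smul]
      rw [List.foldr_cons, shiftedD, hD, hexpand, sum_deriv_prod_map_update_cons_smul,
        List.map_cons, List.prod_cons]
      module

end ShiftedD

/-! ### Wave packets -/

section WavePacket

variable {N : ℕ} {θ : Fin N → ℂ} {z₀ : Fin N → ℝ} {s : ℝ}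

/-- The complex exponential `e^{i s² θ·(z - z₀)}`, which conjugates `D_j` into `D_j + s² θ_j`. -/
noncomputable def planeWave (θ : Fin N → ℂ) (z₀ : Fin N → ℝ) (s : ℝ) (z : Fin N → ℝ) : ℂ :=
  cexp (I * s ^ 2 * ∑ j, θ j * (z j - z₀ j : ℝ))

/-- The plane wave of frequency `s²θ` at `z₀` with the profile `g` at scale `s⁻¹` as its envelope.
The large parameter is `s = (τ / τ₀)^{1/2}`. -/
noncomputable def wavePacket (θ : Fin N → ℂ) (z₀ : Fin N → ℝ) (s : ℝ)
    (g : (Fin N → ℝ) → ℂ) : (Fin N → ℝ) → ℂ :=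
  planeWave θ z₀ s * fun z => g (s • (z - z₀))

lemma hasFDerivAt_planeWave (θ : Fin N → ℂ) (z₀ : Fin N → ℝ) (s : ℝ) (z : Fin N → ℝ) :
    HasFDerivAt (planeWave θ z₀ s) (planeWave θ z₀ s z • ((I * s ^ 2) •
      ∑ j, θ j • ofRealCLM.comp (ContinuousLinearMap.proj (R := ℝ) (φ := fun _ => ℝ) j))) z := by
  have hphase : HasFDerivAt (fun z : Fin N → ℝ => ∑ j, θ j * (z j - z₀ j : ℝ))
      (∑ j, θ j • ofRealCLM.comp (ContinuousLinearMap.proj (R := ℝ) (φ := fun _ => ℝ) j)) z :=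
    HasFDerivAt.fun_sum fun j _ =>
      (ofRealCLM.hasFDerivAt.comp z ((hasFDerivAt_apply j z).sub_const (z₀ j))).const_mul (θ j)
  exact (hphase.const_mul (I * s ^ 2)).cexp

lemma contDiff_planeWave (θ : Fin N → ℂ) (z₀ : Fin N → ℝ) (s : ℝ) :
    ContDiff ℝ ∞ (planeWave θ z₀ s) :=
  (contDiff_const.mul (ContDiff.sum fun j _ => contDiff_const.mul
    (ofRealCLM.contDiff.comp ((contDiff_apply ℝ ℝ j).sub contDiff_const)))).cexp

lemma partialD_planeWave (θ : Fin N → ℂ) (z₀ : Fin N → ℝ) (s : ℝ) (l : Fin N) :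
    partialD l (planeWave θ z₀ s) = ((s : ℂ) ^ 2 * θ l) • planeWave θ z₀ s := by
  ext z
  rw [partialD, pderivC, (hasFDerivAt_planeWave θ z₀ s z).fderiv]
  simp only [smul_apply, sum_apply, ContinuousLinearMap.comp_apply,
    ContinuousLinearMap.proj_apply, ofRealCLM_apply, smul_eq_mul, Pi.smul_apply, Pi.single_apply,
    apply_ite ((↑) : ℝ → ℂ), ofReal_one, ofReal_zero, mul_ite, mul_one, mul_zero,
    Finset.sum_ite_eq', Finset.mem_univ, if_true]
  linear_combination -(planeWave θ z₀ s z * s ^ 2 * θ l) * I_mul_I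

lemma contDiff_wavePacket (θ : Fin N → ℂ) (z₀ : Fin N → ℝ) (s : ℝ) {g : (Fin N → ℝ) → ℂ}
    (hg : ContDiff ℝ ∞ g) : ContDiff ℝ ∞ (wavePacket θ z₀ s g) :=
  (contDiff_planeWave θ z₀ s).mul (hg.comp ((contDiff_id.sub contDiff_const).const_smul s))

lemma partialD_wavePacket (θ : Fin N → ℂ) (z₀ : Fin N → ℝ) (hs : s ≠ 0) (l : Fin N)
    {g : (Fin N → ℝ) → ℂ} (hg : Differentiable ℝ g) :
    partialD l (wavePacket θ z₀ s g) =
      (s : ℂ) ^ 2 • wavePacket θ z₀ s (shiftedD θ s⁻¹ l g) := by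
  have hcomp : Differentiable ℝ fun z : Fin N → ℝ => g (s • (z - z₀)) :=
    hg.comp ((differentiable_id.sub_const z₀).const_smul s)
  have hs' : (s : ℂ) ≠ 0 := ofReal_ne_zero.2 hs
  rw [wavePacket, partialD_mul l ((contDiff_planeWave θ z₀ s).differentiable (by simp)) hcomp,
    partialD_planeWave, partialD_comp_smul_sub l s z₀ hg]
  ext z
  simp only [wavePacket, shiftedD, Pi.add_apply, Pi.mul_apply, Pi.smul_apply, smul_eq_mul,
    ofReal_inv]
  field_simp

lemma foldr_partialD_wavePacket (θ : Fin N → ℂ) (z₀ : Fin N → ℝ) (hs : s ≠ 0)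
    {χ : (Fin N → ℝ) → ℂ} (hχ : ContDiff ℝ ∞ χ) (w : List (Fin N)) :
    w.foldr partialD (wavePacket θ z₀ s χ) =
      (s : ℂ) ^ (2 * w.length) • wavePacket θ z₀ s (w.foldr (shiftedD θ s⁻¹) χ) := by
  induction w with
  | nil => simp
  | cons l w ih =>
    rw [List.foldr_cons, ih, partialD_smul, partialD_wavePacket θ z₀ hs l
      ((contDiff_foldr_shiftedD θ s⁻¹ hχ w).differentiable (by simp)), smul_smul, ← pow_add,
      List.length_cons, mul_add_one, List.foldr_cons]

lemma DopC_wavePacket (θ : Fin N → ℂ) (z₀ : Fin N → ℝ) (hs : s ≠ 0) {χ : (Fin N → ℝ) → ℂ}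
    (hχ : ContDiff ℝ ∞ χ) (α : Fin N → ℕ) (z : Fin N → ℝ) :
    DopC α (wavePacket θ z₀ s χ) z = planeWave θ z₀ s z *
      ((s : ℂ) ^ (2 * ∑ j, α j) * (indexWord α).foldr (shiftedD θ s⁻¹) χ (s • (z - z₀))) := by
  rw [DopC_eq_foldr, foldr_partialD_wavePacket θ z₀ hs hχ, length_indexWord]
  simp only [wavePacket, Pi.smul_apply, Pi.mul_apply, smul_eq_mul]
  ring

lemma smul_sub_mem_closedBall_zero_iff {E : Type*} [SeminormedAddCommGroup E] [NormedSpace ℝ E]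
    {z z₀ : E} {R : ℝ} (hs : 0 < s) :
    s • (z - z₀) ∈ Metric.closedBall 0 R ↔ z ∈ Metric.closedBall z₀ (R * s⁻¹) := by
  rw [mem_closedBall_zero_iff, norm_smul, Real.norm_of_nonneg hs.le, mem_closedBall_iff_norm,
    ← div_eq_mul_inv, le_div_iff₀' hs]

lemma tsupport_wavePacket_subset (θ : Fin N → ℂ) (z₀ : Fin N → ℝ) (hs : 0 < s) {R : ℝ}
    {χ : (Fin N → ℝ) → ℂ} (hχ : support χ ⊆ Metric.closedBall 0 R) :
    tsupport (wavePacket θ z₀ s χ) ⊆ Metric.closedBall z₀ (R * s⁻¹) := by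
  refine closure_minimal (fun z hz => ?_) Metric.isClosed_closedBall
  exact (smul_sub_mem_closedBall_zero_iff hs).1 (hχ (right_ne_zero_of_mul hz))

end WavePacket

/-! ### Asymptotics on shrinking balls -/

section ShrinkingBalls

variable {E F : Type*} [NormedAddCommGroup E] [NormedAddCommGroup F] {z₀ : E} {R : ℝ}

/-- The filter of pairs `(s, z)` with `s → ∞` and `‖z - z₀‖ ≤ R / s`, expressing asymptotics in `s`
that are uniform on the balls of radius `R / s`. -/
def shrinkingBalls (z₀ : E) (R : ℝ) : Filter (ℝ × E) :=
  (atTop ×ˢ ⊤) ⊓ 𝓟 {p | p.2 ∈ Metric.closedBall z₀ (R * p.1⁻¹)}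

lemma eventually_shrinkingBalls {P : ℝ × E → Prop} :
    (∀ᶠ p in shrinkingBalls z₀ R, P p) ↔
      ∀ᶠ s in atTop, ∀ z ∈ Metric.closedBall z₀ (R * s⁻¹), P (s, z) := by
  simp only [shrinkingBalls, eventually_inf_principal, prod_top, eventually_comap, Prod.forall,
    Set.mem_ofPred_eq]
  exact eventually_congr (.of_forall fun s =>
    ⟨fun h z hz => h s z rfl hz, fun h t z hst hz => by subst hst; exact h z hz⟩)

lemma tendsto_fst_shrinkingBalls (z₀ : E) (R : ℝ) :
    Tendsto Prod.fst (shrinkingBalls z₀ R) atTop :=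
  tendsto_fst.mono_left inf_le_left

lemma eventually_ne_zero_shrinkingBalls (z₀ : E) (R : ℝ) :
    ∀ᶠ p in shrinkingBalls z₀ R, p.1 ≠ 0 :=
  (tendsto_fst_shrinkingBalls z₀ R).eventually (eventually_ne_atTop 0)

lemma isBigO_sub_shrinkingBalls (z₀ : E) (R : ℝ) :
    (fun p : ℝ × E => p.2 - z₀) =O[shrinkingBalls z₀ R] fun p => p.1⁻¹ := by
  refine IsBigO.of_bound R (eventually_shrinkingBalls.2 ?_)
  filter_upwards [eventually_gt_atTop 0] with s hs z hz
  simpa [abs_of_pos hs] using mem_closedBall_iff_norm.1 hz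

lemma tendsto_inv_fst_shrinkingBalls (z₀ : E) (R : ℝ) :
    Tendsto (fun p : ℝ × E => p.1⁻¹) (shrinkingBalls z₀ R) (𝓝 0) :=
  tendsto_inv_atTop_zero.comp (tendsto_fst_shrinkingBalls z₀ R)

lemma tendsto_snd_shrinkingBalls (z₀ : E) (R : ℝ) :
    Tendsto Prod.snd (shrinkingBalls z₀ R) (𝓝 z₀) := by
  rw [← tendsto_sub_nhds_zero_iff]
  exact (isBigO_sub_shrinkingBalls z₀ R).trans_tendsto (tendsto_inv_fst_shrinkingBalls z₀ R)

lemma isBigO_one_of_continuousAt_shrinkingBalls (R : ℝ) {f : E → F} (hf : ContinuousAt f z₀) :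
    (fun p : ℝ × E => f p.2) =O[shrinkingBalls z₀ R] fun _ => (1 : ℝ) :=
  (hf.tendsto.comp (tendsto_snd_shrinkingBalls z₀ R)).isBigO_one ℝ

lemma isBigO_one_rescaled_shrinkingBalls [NormedSpace ℝ E] [ProperSpace E] (z₀ : E) (R : ℝ)
    {H : ℝ → E → F} (hH : Continuous (uncurry H)) :
    (fun p : ℝ × E => H p.1⁻¹ (p.1 • (p.2 - z₀))) =O[shrinkingBalls z₀ R] fun _ => (1 : ℝ) := by
  obtain ⟨K, hK⟩ := ((isCompact_Icc (a := (0 : ℝ)) (b := 1)).prod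
    (isCompact_closedBall (0 : E) R)).exists_bound_of_continuousOn hH.continuousOn
  refine IsBigO.of_bound K (eventually_shrinkingBalls.2 ?_)
  filter_upwards [eventually_ge_atTop 1] with s hs z hz
  have hs0 : 0 < s := one_pos.trans_le hs
  have hy : s • (z - z₀) ∈ Metric.closedBall 0 R := (smul_sub_mem_closedBall_zero_iff hs0).2 hz
  simpa using hK (s⁻¹, s • (z - z₀)) ⟨⟨inv_nonneg.2 hs0.le, inv_le_one_of_one_le₀ hs⟩, hy⟩

lemma isBigO_sub_sub_fderiv [NormedSpace ℝ E] [NormedSpace ℝ F] {f : E → F}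
    (hf : ContDiffAt ℝ 2 f z₀) :
    (fun z => f z - f z₀ - fderiv ℝ f z₀ (z - z₀)) =O[𝓝 z₀] fun z => ‖z - z₀‖ ^ 2 := by
  obtain ⟨K, t, ht, hlip⟩ := (hf.fderiv_right (m := 1) (by norm_num)).exists_lipschitzOnWith
  have hdiff : ∀ᶠ z in 𝓝 z₀, DifferentiableAt ℝ f z :=
    (hf.eventually (by simp)).mono fun z hz => hz.differentiableAt (by simp)
  obtain ⟨ρ, hρ, hball⟩ := Metric.nhds_basis_closedBall.mem_iff.1 (inter_mem ht hdiff)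
  refine IsBigO.of_bound K ?_
  filter_upwards [Metric.closedBall_mem_nhds z₀ hρ] with z hz
  have hsub : Metric.closedBall z₀ ‖z - z₀‖ ⊆ t ∩ {z | DifferentiableAt ℝ f z} :=
    (Metric.closedBall_subset_closedBall (mem_closedBall_iff_norm.1 hz)).trans hball
  have hfderiv (y : E) (hy : y ∈ Metric.closedBall z₀ ‖z - z₀‖) :
      ‖fderiv ℝ f y - fderiv ℝ f z₀‖ ≤ K * ‖z - z₀‖ :=
    (hlip.norm_sub_le (hsub hy).1 (mem_of_mem_nhds ht)).trans
      (by gcongr; exact mem_closedBall_iff_norm.1 hy)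
  have hmean := (convex_closedBall z₀ ‖z - z₀‖).norm_image_sub_le_of_norm_hasFDerivWithin_le'
    (fun y hy => (hsub hy).2.hasFDerivAt.hasFDerivWithinAt) hfderiv
    (Metric.mem_closedBall_self (norm_nonneg _)) (mem_closedBall_iff_norm.2 le_rfl)
  simpa [sq, mul_assoc] using hmean

lemma isBigO_sub_sub_fderiv_shrinkingBalls [NormedSpace ℝ E] [NormedSpace ℝ F] (R : ℝ) {f : E → F}
    (hf : ContDiffAt ℝ 2 f z₀) :
    (fun p : ℝ × E => f p.2 - f z₀ - fderiv ℝ f z₀ (p.2 - z₀)) =O[shrinkingBalls z₀ R]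
      fun p => p.1⁻¹ ^ 2 :=
  ((isBigO_sub_sub_fderiv hf).comp_tendsto (tendsto_snd_shrinkingBalls z₀ R)).trans
    ((isBigO_sub_shrinkingBalls z₀ R).norm_left.pow 2)

lemma isBigO_sub_of_differentiableAt_shrinkingBalls [NormedSpace ℝ E] [NormedSpace ℝ F] (R : ℝ)
    {f : E → F} (hf : DifferentiableAt ℝ f z₀) :
    (fun p : ℝ × E => f p.2 - f z₀) =O[shrinkingBalls z₀ R] fun p => p.1⁻¹ :=
  (hf.isBigO_sub.comp_tendsto (tendsto_snd_shrinkingBalls z₀ R)).trans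
    (isBigO_sub_shrinkingBalls z₀ R)

end ShrinkingBalls

/-! ### Comparison of `L^p` norms -/

section LpBounds

variable {X : Type*} [MeasurableSpace X] {F : Type*} [NormedAddCommGroup F] {μ : Measure X}
  {p c : ℝ≥0∞} {S : Set X} {f : X → F}

lemma mul_rpow_le_eLpNorm_of_le_enorm (hS : MeasurableSet S) (hμS : μ S ≠ 0) (hp : p ≠ 0)
    (hf : ∀ x ∈ S, c ≤ ‖f x‖ₑ) : c * μ S ^ (1 / p.toReal) ≤ eLpNorm f p μ := by
  rw [← enorm_eq_self c, ← eLpNorm_indicator_const' hS hμS hp]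
  refine eLpNorm_mono_enorm fun x => ?_
  by_cases hx : x ∈ S
  · simpa [hx] using hf x hx
  · simp [hx]

lemma eLpNorm_le_mul_rpow_of_support_subset (hsupp : support f ⊆ S)
    (hf : ∀ x ∈ S, ‖f x‖ₑ ≤ c) : eLpNorm f p μ ≤ c * μ S ^ (1 / p.toReal) := by
  refine (eLpNorm_mono_enorm (g := S.indicator fun _ => c) fun x => ?_).trans
    (eLpNorm_indicator_const_le c p)
  by_cases hx : x ∈ S
  · simpa [hx] using hf x hx
  · simp [hx, notMem_support.1 fun h => hx (hsupp h)]

end LpBounds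

section Comparison

variable {E : Type*} [NormedAddCommGroup E] [NormedSpace ℝ E] [FiniteDimensional ℝ E]
  [MeasurableSpace E] [BorelSpace E] {μ : Measure E} [μ.IsAddHaarMeasure]
  {F G : Type*} [NormedAddCommGroup F] [NormedAddCommGroup G] {p : ℝ≥0∞} {z₀ : E} {r R : ℝ}

lemma mul_le_of_mul_eLpNorm_le (hp : p ≠ 0) {t : ℝ} (hr : 0 < r) (hR : 0 ≤ R) (ht : 0 < t)
    {u : E → F} {v : E → G} {A C c d : ℝ≥0∞}
    (hu : ∀ z ∈ Metric.closedBall z₀ (r * t), c ≤ ‖u z‖ₑ)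
    (hv : ∀ z ∈ Metric.closedBall z₀ (R * t), ‖v z‖ₑ ≤ d)
    (hsupp : support v ⊆ Metric.closedBall z₀ (R * t))
    (h : A * eLpNorm u p μ ≤ C * eLpNorm v p μ) :
    A * c ≤ C * ENNReal.ofReal ((R / r) ^ finrank ℝ E) ^ (1 / p.toReal) * d := by
  set V := μ (Metric.closedBall z₀ (r * t))
  have hrt : 0 < r * t := mul_pos hr ht
  have hV : 0 < V := Metric.measure_closedBall_pos μ z₀ hrt
  have hVtop : V ≠ ⊤ := measure_closedBall_lt_top.ne
  have hexp : 0 ≤ 1 / p.toReal := by positivity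
  have hvol : μ (Metric.closedBall z₀ (R * t)) = ENNReal.ofReal ((R / r) ^ finrank ℝ E) * V := by
    rw [show R * t = R / r * (r * t) by field_simp,
      Measure.addHaar_closedBall_mul μ z₀ (by positivity) hrt.le,
      ← Measure.addHaar_closedBall_center μ z₀]
  have hle : A * c * V ^ (1 / p.toReal) ≤
      C * ENNReal.ofReal ((R / r) ^ finrank ℝ E) ^ (1 / p.toReal) * d * V ^ (1 / p.toReal) :=
    calc A * c * V ^ (1 / p.toReal) = A * (c * V ^ (1 / p.toReal)) := mul_assoc _ _ _
      _ ≤ A * eLpNorm u p μ := by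
        gcongr
        exact mul_rpow_le_eLpNorm_of_le_enorm measurableSet_closedBall hV.ne' hp hu
      _ ≤ C * eLpNorm v p μ := h
      _ ≤ C * (d * μ (Metric.closedBall z₀ (R * t)) ^ (1 / p.toReal)) := by
        gcongr
        exact eLpNorm_le_mul_rpow_of_support_subset hsupp hv
      _ = _ := by rw [hvol, ENNReal.mul_rpow_of_nonneg _ _ hexp]; ring
  exact (ENNReal.mul_le_mul_iff_left (ENNReal.rpow_pos hV hVtop).ne'
    (ENNReal.rpow_ne_top_of_nonneg hexp hVtop)).1 hle

lemma isBigO_of_enorm_mul_eLpNorm_le (hp : p ≠ 0) (hr : 0 < r) (hR : 0 ≤ R)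
    {u : ℝ → E → F} {v : ℝ → E → G} {f g A : ℝ → ℝ} {C : ℝ≥0∞} (hC : C ≠ ⊤)
    (hu : (fun x : ℝ × E => f x.1) =O[shrinkingBalls z₀ r] uncurry u)
    (hv : uncurry v =O[shrinkingBalls z₀ R] fun x : ℝ × E => g x.1)
    (hsupp : ∀ᶠ s in atTop, support (v s) ⊆ Metric.closedBall z₀ (R * s⁻¹))
    (h : ∀ᶠ s in atTop, ‖A s‖ₑ * eLpNorm (u s) p μ ≤ C * eLpNorm (v s) p μ) :
    (fun s => A s * f s) =O[atTop] g := by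
  obtain ⟨b, hb, hu⟩ := hu.exists_pos
  obtain ⟨d, hd, hv⟩ := hv.exists_pos
  set K := C * ENNReal.ofReal ((R / r) ^ finrank ℝ E) ^ (1 / p.toReal)
  have hK : K ≠ ⊤ := by finiteness
  refine IsBigO.of_bound (b * (K.toReal * d)) ?_
  filter_upwards [eventually_gt_atTop 0, hsupp, h, eventually_shrinkingBalls.1 hu.bound,
    eventually_shrinkingBalls.1 hv.bound] with s hs hsupp h hu hv
  have hu' (z : E) (hz : z ∈ Metric.closedBall z₀ (r * s⁻¹)) :
      ENNReal.ofReal (‖f s‖ / b) ≤ ‖u s z‖ₑ := by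
    rw [← ofReal_norm]
    exact ENNReal.ofReal_le_ofReal ((div_le_iff₀' hb).2 (hu z hz))
  have hv' (z : E) (hz : z ∈ Metric.closedBall z₀ (R * s⁻¹)) :
      ‖v s z‖ₑ ≤ ENNReal.ofReal (d * ‖g s‖) := by
    rw [← ofReal_norm]
    exact ENNReal.ofReal_le_ofReal (hv z hz)
  have hle : ‖A s‖ₑ * ENNReal.ofReal (‖f s‖ / b) ≤ K * ENNReal.ofReal (d * ‖g s‖) :=
    mul_le_of_mul_eLpNorm_le hp hr hR (inv_pos.2 hs) hu' hv' hsupp h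
  rw [← ofReal_norm, ← ENNReal.ofReal_mul (norm_nonneg _), ← ENNReal.ofReal_toReal hK,
    ← ENNReal.ofReal_mul ENNReal.toReal_nonneg, ENNReal.ofReal_le_ofReal_iff (by positivity),
    mul_div_assoc', div_le_iff₀' hb] at hle
  simpa [mul_assoc] using hle

end Comparison

/-! ### The weight on wave packets -/

section Weight

variable {N : ℕ} {θ : Fin N → ℂ} {z₀ : Fin N → ℝ} {τ₀ : ℝ} {φ : (Fin N → ℝ) → ℝ}

lemma norm_planeWave (θ : Fin N → ℂ) (z₀ : Fin N → ℝ) (s : ℝ) (z : Fin N → ℝ) :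
    ‖planeWave θ z₀ s z‖ = Real.exp (-(s ^ 2 * ∑ j, (θ j).im * (z j - z₀ j))) := by
  have hphase : I * s ^ 2 * ∑ j, θ j * (z j - z₀ j : ℝ) =
      ((s ^ 2 : ℝ) : ℂ) * (I * ∑ j, θ j * (z j - z₀ j : ℝ)) := by push_cast; ring
  rw [planeWave, norm_exp, hphase, re_ofReal_mul, I_mul_re, im_sum]
  simp only [im_mul_ofReal, mul_neg]

lemma clm_apply_eq_sum_smul_single {F : Type*} [AddCommMonoid F] [Module ℝ F]
    [TopologicalSpace F] (L : (Fin N → ℝ) →L[ℝ] F) (v : Fin N → ℝ) :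
    L v = ∑ j, v j • L (Pi.single j 1) := by
  conv_lhs => rw [pi_eq_sum_univ' v]
  simp only [map_sum, map_smul]

-- The plane wave is chosen to cancel the linear part of the exponent of the weight; the Taylor
-- remainder, multiplied by `s²`, is bounded at distance `O(s⁻¹)` from `z₀`.
lemma isTheta_exp_mul_planeWave (R : ℝ) (hφ : ContDiffAt ℝ 2 φ z₀)
    (hθ : ∀ j, (θ j).im = τ₀ * fderiv ℝ φ z₀ (Pi.single j 1)) :
    (fun p : ℝ × (Fin N → ℝ) =>
      (Real.exp (τ₀ * p.1 ^ 2 * φ p.2) : ℂ) * planeWave θ z₀ p.1 p.2) =Θ[shrinkingBalls z₀ R]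
        fun p => Real.exp (τ₀ * p.1 ^ 2 * φ z₀) := by
  have hlinear (z : Fin N → ℝ) :
      ∑ j, (θ j).im * (z j - z₀ j) = τ₀ * fderiv ℝ φ z₀ (z - z₀) := by
    rw [clm_apply_eq_sum_smul_single (fderiv ℝ φ z₀), Finset.mul_sum]
    refine Finset.sum_congr rfl fun j _ => ?_
    rw [hθ, Pi.sub_apply, smul_eq_mul]
    ring
  have hnorm (p : ℝ × (Fin N → ℝ)) :
      ‖(Real.exp (τ₀ * p.1 ^ 2 * φ p.2) : ℂ) * planeWave θ z₀ p.1 p.2‖ =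
        Real.exp (τ₀ * p.1 ^ 2 * (φ p.2 - fderiv ℝ φ z₀ (p.2 - z₀))) := by
    rw [norm_mul, norm_planeWave, hlinear, norm_real, Real.norm_of_nonneg (Real.exp_nonneg _),
      ← Real.exp_add]
    ring_nf
  have hbounded : (fun p : ℝ × (Fin N → ℝ) => τ₀ * p.1 ^ 2 *
      (φ p.2 - fderiv ℝ φ z₀ (p.2 - z₀)) - τ₀ * p.1 ^ 2 * φ z₀) =O[shrinkingBalls z₀ R]
        fun _ => (1 : ℝ) := by
    have hquad := ((isBigO_refl (fun p : ℝ × (Fin N → ℝ) => p.1 ^ 2) (shrinkingBalls z₀ R)).mul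
      (isBigO_sub_sub_fderiv_shrinkingBalls R hφ)).const_mul_left τ₀
    refine hquad.congr' (.of_forall fun p => by ring) ?_
    filter_upwards [eventually_ne_zero_shrinkingBalls z₀ R] with p hp
    field_simp
  refine isTheta_norm_left.1 ?_
  simp only [hnorm]
  exact Real.isTheta_exp_comp_exp_comp.2 ((isBigO_one_iff ℝ).1 hbounded)

end Weight

/-! ### Differential operators acting on wave packets -/

section DiffOp

variable {N : ℕ} {ι : Type*} [Fintype ι] {m : ℕ} {e : ι → Fin N → ℕ}
  {a : ι → (Fin N → ℝ) → ℂ} {z₀ : Fin N → ℝ} {θ : Fin N → ℂ} {χ : (Fin N → ℝ) → ℂ} {R : ℝ}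

/-- The differential operator `∑_{|α| ≤ m} a_α D^α`. The terms are labelled by an index `i` with
multi-index `e i`; labels with `|e i| > m` do not contribute. -/
noncomputable def diffOp (m : ℕ) (e : ι → Fin N → ℕ) (a : ι → (Fin N → ℝ) → ℂ)
    (u : (Fin N → ℝ) → ℂ) (z : Fin N → ℝ) : ℂ :=
  ∑ i with ∑ j, e i j ≤ m, a i z * DopC (e i) u z

/-- The principal symbol `∑_{|α| = m} a_α(z) ζ^α` of `diffOp m e a`. -/
noncomputable def principalSymbol (m : ℕ) (e : ι → Fin N → ℕ) (a : ι → (Fin N → ℝ) → ℂ)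
    (z : Fin N → ℝ) (ζ : Fin N → ℂ) : ℂ :=
  ∑ i with ∑ j, e i j = m, a i z * ∏ j, ζ j ^ e i j

lemma support_diffOp_subset (m : ℕ) (e : ι → Fin N → ℕ) (a : ι → (Fin N → ℝ) → ℂ)
    (u : (Fin N → ℝ) → ℂ) : support (diffOp m e a u) ⊆ tsupport u := by
  intro z hz
  obtain ⟨i, -, hi⟩ := Finset.exists_ne_zero_of_sum_ne_zero hz
  exact tsupport_DopC_subset (e i) u (subset_tsupport _ (right_ne_zero_of_mul hi))

lemma diffOp_wavePacket {s : ℝ} (hs : s ≠ 0) (hχ : ContDiff ℝ ∞ χ) (z : Fin N → ℝ) :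
    diffOp m e a (wavePacket θ z₀ s χ) z = planeWave θ z₀ s z * ∑ i with ∑ j, e i j ≤ m,
      a i z * ((s : ℂ) ^ (2 * ∑ j, e i j) *
        (indexWord (e i)).foldr (shiftedD θ s⁻¹) χ (s • (z - z₀))) := by
  simp only [diffOp, DopC_wavePacket θ z₀ hs hχ, Finset.mul_sum, mul_left_comm]

lemma deriv_principalSymbol_update (z : Fin N → ℝ) (j : Fin N) :
    deriv (fun t => principalSymbol m e a z (update θ j t)) (θ j) =
      ∑ i with ∑ l, e i l = m,
        a i z * deriv (fun t => ((indexWord (e i)).map (update θ j t)).prod) (θ j) := by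
  have hdiff (w : List (Fin N)) :
      DifferentiableAt ℂ (fun t => (w.map (update θ j t)).prod) (θ j) :=
    (differentiable_prod_map w _).comp _ (hasDerivAt_update θ j (θ j)).differentiableAt
  simp only [principalSymbol, ← prod_map_indexWord]
  rw [deriv_fun_sum fun i _ => (hdiff _).const_mul _]
  simp only [deriv_const_mul _ (hdiff _)]

lemma exists_sum_foldr_shiftedD_eq (m : ℕ) (e : ι → Fin N → ℕ) (a : ι → (Fin N → ℝ) → ℂ)
    (θ : Fin N → ℂ) (hχ : ContDiff ℝ ∞ χ) :
    ∃ H : ι → ℝ → (Fin N → ℝ) → ℂ, (∀ i, ContDiff ℝ ∞ (uncurry (H i))) ∧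
      ∀ (z : Fin N → ℝ) (ε : ℝ) (y : Fin N → ℝ),
        ∑ i with ∑ j, e i j = m, a i z * (indexWord (e i)).foldr (shiftedD θ ε) χ y =
          principalSymbol m e a z θ * χ y +
          ε * ∑ j, deriv (fun t => principalSymbol m e a z (update θ j t)) (θ j) *
            partialD j χ y +
          (ε : ℂ) ^ 2 * ∑ i with ∑ j, e i j = m, a i z * H i ε y := by
  choose H hH hexpand using fun i => exists_foldr_shiftedD_eq θ hχ (indexWord (e i))
  refine ⟨H, hH, fun z ε y => ?_⟩
  simp only [deriv_principalSymbol_update]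
  simp only [hexpand, principalSymbol, prod_map_indexWord,
    Pi.add_apply, Pi.smul_apply, Finset.sum_apply, smul_eq_mul, Finset.sum_mul]
  rw [Finset.sum_comm, Finset.mul_sum, Finset.mul_sum, ← Finset.sum_add_distrib,
    ← Finset.sum_add_distrib]
  refine Finset.sum_congr rfl fun i _ => ?_
  simp only [mul_assoc, ← Finset.mul_sum]
  ring

lemma isBigO_principalSymbol_shrinkingBalls (R : ℝ) (ha : ∀ i, ContDiffAt ℝ 2 (a i) z₀)
    (hq : principalSymbol m e a z₀ θ = 0)
    (hdz : ∀ j, fderiv ℝ (fun z => principalSymbol m e a z θ) z₀ (Pi.single j 1) = 0) :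
    (fun p : ℝ × (Fin N → ℝ) => principalSymbol m e a p.2 θ) =O[shrinkingBalls z₀ R]
      fun p => p.1⁻¹ ^ 2 := by
  have hsmooth : ContDiffAt ℝ 2 (fun z => principalSymbol m e a z θ) z₀ :=
    ContDiffAt.sum fun i _ => (ha i).mul contDiffAt_const
  have hfderiv : fderiv ℝ (fun z => principalSymbol m e a z θ) z₀ = 0 := by
    ext v
    rw [clm_apply_eq_sum_smul_single]
    simp only [hdz, smul_zero, Finset.sum_const_zero, zero_apply]
  simpa only [hq, hfderiv, zero_apply, sub_zero]
    using isBigO_sub_sub_fderiv_shrinkingBalls R hsmooth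

lemma isBigO_deriv_principalSymbol_shrinkingBalls (R : ℝ) (j : Fin N)
    (ha : ∀ i, DifferentiableAt ℝ (a i) z₀)
    (hdζ : deriv (fun t => principalSymbol m e a z₀ (update θ j t)) (θ j) = 0) :
    (fun p : ℝ × (Fin N → ℝ) =>
      deriv (fun t => principalSymbol m e a p.2 (update θ j t)) (θ j)) =O[shrinkingBalls z₀ R]
        fun p => p.1⁻¹ := by
  have hdiff : DifferentiableAt ℝ
      (fun z => deriv (fun t => principalSymbol m e a z (update θ j t)) (θ j)) z₀ := by
    simp only [deriv_principalSymbol_update]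
    exact DifferentiableAt.fun_sum fun i _ => (ha i).mul_const _
  simpa only [hdζ, sub_zero] using isBigO_sub_of_differentiableAt_shrinkingBalls R hdiff

lemma isBigO_principal_part (R : ℝ) (hχ : ContDiff ℝ ∞ χ) (ha : ∀ i, ContDiffAt ℝ 2 (a i) z₀)
    (hq : principalSymbol m e a z₀ θ = 0)
    (hdz : ∀ j, fderiv ℝ (fun z => principalSymbol m e a z θ) z₀ (Pi.single j 1) = 0)
    (hdζ : ∀ j, deriv (fun t => principalSymbol m e a z₀ (update θ j t)) (θ j) = 0) :
    (fun p : ℝ × (Fin N → ℝ) => ∑ i with ∑ j, e i j = m,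
      a i p.2 * (indexWord (e i)).foldr (shiftedD θ p.1⁻¹) χ (p.1 • (p.2 - z₀)))
        =O[shrinkingBalls z₀ R] fun p => p.1⁻¹ ^ 2 := by
  obtain ⟨H, hH, hexpand⟩ := exists_sum_foldr_shiftedD_eq m e a θ hχ
  have hε : (fun p : ℝ × (Fin N → ℝ) => ((p.1⁻¹ : ℝ) : ℂ)) =O[shrinkingBalls z₀ R]
      fun p => p.1⁻¹ := isBigO_of_le _ fun p => (norm_real _).le
  have hbounded {g : (Fin N → ℝ) → ℂ} (hg : ContDiff ℝ ∞ g) :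
      (fun p : ℝ × (Fin N → ℝ) => g (p.1 • (p.2 - z₀))) =O[shrinkingBalls z₀ R]
        fun _ => (1 : ℝ) :=
    isBigO_one_rescaled_shrinkingBalls z₀ R (H := fun _ => g) (hg.continuous.comp continuous_snd)
  have horder0 := (isBigO_principalSymbol_shrinkingBalls R ha hq hdz).mul (hbounded hχ)
  have horder1 := hε.mul (IsBigO.fun_sum (s := Finset.univ) fun j _ =>
    (isBigO_deriv_principalSymbol_shrinkingBalls R j
      (fun i => (ha i).differentiableAt (by simp)) (hdζ j)).mul
      (hbounded (contDiff_partialD j hχ)))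
  have horder2 := (hε.pow 2).mul (IsBigO.fun_sum (s := {i | ∑ j, e i j = m}) fun i _ =>
    (isBigO_one_of_continuousAt_shrinkingBalls R (ha i).continuousAt).mul
      (isBigO_one_rescaled_shrinkingBalls z₀ R (hH i).continuous))
  simp only [hexpand]
  refine ((horder0.congr_right fun p => ?_).add (horder1.congr_right fun p => ?_)).add
    (horder2.congr_right fun p => ?_) <;> ring

lemma isBigO_lower_order_term (R : ℝ) (hχ : ContDiff ℝ ∞ χ) {b : (Fin N → ℝ) → ℂ}
    (hb : ContinuousAt b z₀) (w : List (Fin N)) {k : ℕ} (hk : k < m) :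
    (fun p : ℝ × (Fin N → ℝ) =>
      b p.2 * ((p.1 : ℂ) ^ (2 * k) * w.foldr (shiftedD θ p.1⁻¹) χ (p.1 • (p.2 - z₀))))
        =O[shrinkingBalls z₀ R] fun p => p.1 ^ (2 * m) * p.1⁻¹ ^ 2 := by
  have hpow : (fun p : ℝ × (Fin N → ℝ) => (p.1 : ℂ) ^ (2 * k)) =O[shrinkingBalls z₀ R]
      fun p => p.1 ^ (2 * m) * p.1⁻¹ ^ 2 := by
    refine IsBigO.of_bound 1 (eventually_shrinkingBalls.2 ?_)
    filter_upwards [eventually_ge_atTop 1] with s hs z _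
    have hcancel : s ^ (2 * m) * s⁻¹ ^ 2 = s ^ (2 * m - 2) := by
      rw [inv_pow, ← pow_sub₀ _ (by positivity) (by omega)]
    rw [hcancel, ← ofReal_pow, norm_real, Real.norm_of_nonneg (by positivity),
      Real.norm_of_nonneg (by positivity), one_mul]
    exact pow_le_pow_right₀ hs (by omega)
  have hfold := isBigO_one_rescaled_shrinkingBalls z₀ R
    (contDiff_uncurry_foldr_shiftedD θ hχ w).continuous
  simpa only [one_mul, mul_one] using
    (isBigO_one_of_continuousAt_shrinkingBalls R hb).mul (hpow.mul hfold)

lemma isBigO_diffOp_amplitude (R : ℝ) (hχ : ContDiff ℝ ∞ χ) (ha : ∀ i, ContDiffAt ℝ 2 (a i) z₀)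
    (hq : principalSymbol m e a z₀ θ = 0)
    (hdz : ∀ j, fderiv ℝ (fun z => principalSymbol m e a z θ) z₀ (Pi.single j 1) = 0)
    (hdζ : ∀ j, deriv (fun t => principalSymbol m e a z₀ (update θ j t)) (θ j) = 0) :
    (fun p : ℝ × (Fin N → ℝ) => ∑ i with ∑ j, e i j ≤ m, a i p.2 *
      ((p.1 : ℂ) ^ (2 * ∑ j, e i j) *
        (indexWord (e i)).foldr (shiftedD θ p.1⁻¹) χ (p.1 • (p.2 - z₀))))
      =O[shrinkingBalls z₀ R] fun p => p.1 ^ (2 * m) * p.1⁻¹ ^ 2 := by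
  have hpow : (fun p : ℝ × (Fin N → ℝ) => (p.1 : ℂ) ^ (2 * m)) =O[shrinkingBalls z₀ R]
      fun p => p.1 ^ (2 * m) := isBigO_of_le _ fun p => by simp
  have hprincipal := hpow.mul (isBigO_principal_part R hχ ha hq hdz hdζ)
  have hlower := IsBigO.fun_sum (s := {i | ∑ j, e i j < m}) fun i hi =>
    isBigO_lower_order_term R (θ := θ) hχ (ha i).continuousAt (indexWord (e i))
      (Finset.mem_filter.1 hi).2
  refine (hprincipal.add hlower).congr_left fun p => ?_
  rw [Finset.mul_sum]
  simp only [Finset.sum_filter, ← Finset.sum_add_distrib]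
  refine Finset.sum_congr rfl fun i _ => ?_
  rcases lt_trichotomy (∑ j, e i j) m with hlt | heq | hgt
  · simp [hlt, hlt.le, hlt.ne]
  · rw [if_pos heq, if_neg heq.not_lt, if_pos heq.le, heq, add_zero, mul_left_comm]
  · simp [hgt.ne', hgt.not_ge, hgt.not_gt]

variable {τ₀ : ℝ} {φ : (Fin N → ℝ) → ℝ}

lemma isBigO_exp_mul_diffOp_wavePacket (R : ℝ) (hχ : ContDiff ℝ ∞ χ)
    (ha : ∀ i, ContDiffAt ℝ 2 (a i) z₀) (hφ : ContDiffAt ℝ 2 φ z₀)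
    (hθ : ∀ j, (θ j).im = τ₀ * fderiv ℝ φ z₀ (Pi.single j 1))
    (hq : principalSymbol m e a z₀ θ = 0)
    (hdz : ∀ j, fderiv ℝ (fun z => principalSymbol m e a z θ) z₀ (Pi.single j 1) = 0)
    (hdζ : ∀ j, deriv (fun t => principalSymbol m e a z₀ (update θ j t)) (θ j) = 0) :
    (fun p : ℝ × (Fin N → ℝ) => (Real.exp (τ₀ * p.1 ^ 2 * φ p.2) : ℂ) *
      diffOp m e a (wavePacket θ z₀ p.1 χ) p.2) =O[shrinkingBalls z₀ R]
        fun p => Real.exp (τ₀ * p.1 ^ 2 * φ z₀) * (p.1 ^ (2 * m) * p.1⁻¹ ^ 2) := by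
  refine ((isTheta_exp_mul_planeWave R hφ hθ).isBigO.mul
    (isBigO_diffOp_amplitude R hχ ha hq hdz hdζ)).congr' ?_ .rfl
  filter_upwards [eventually_ne_zero_shrinkingBalls z₀ R] with p hp
  rw [diffOp_wavePacket hp hχ, mul_assoc]

lemma isBigO_exp_mul_DopC_wavePacket (hχ : ContDiff ℝ ∞ χ)
    (hχ_one : ∀ y ∈ Metric.closedBall 0 R, χ =ᶠ[𝓝 y] fun _ => 1) (hφ : ContDiffAt ℝ 2 φ z₀)
    (hθ : ∀ j, (θ j).im = τ₀ * fderiv ℝ φ z₀ (Pi.single j 1)) {α : Fin N → ℕ}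
    (hα : ∏ j, θ j ^ α j ≠ 0) :
    (fun p : ℝ × (Fin N → ℝ) => Real.exp (τ₀ * p.1 ^ 2 * φ z₀) * p.1 ^ (2 * ∑ j, α j))
      =O[shrinkingBalls z₀ R] fun p =>
        (Real.exp (τ₀ * p.1 ^ 2 * φ p.2) : ℂ) * DopC α (wavePacket θ z₀ p.1 χ) p.2 := by
  have hpow : (fun p : ℝ × (Fin N → ℝ) => p.1 ^ (2 * ∑ j, α j)) =O[shrinkingBalls z₀ R]
      fun p => (∏ j, θ j ^ α j) * (p.1 : ℂ) ^ (2 * ∑ j, α j) :=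
    (isBigO_of_le _ fun p => by simp).const_mul_right hα
  refine ((isTheta_exp_mul_planeWave R hφ hθ).isBigO_symm.mul hpow).congr' .rfl
    (eventually_shrinkingBalls.2 ?_)
  filter_upwards [eventually_gt_atTop 0] with s hs z hz
  have hy : s • (z - z₀) ∈ Metric.closedBall 0 R := (smul_sub_mem_closedBall_zero_iff hs).2 hz
  rw [DopC_wavePacket θ z₀ hs.ne' hχ,
    (foldr_shiftedD_eventuallyEq_const θ s⁻¹ (hχ_one _ hy) (indexWord α)).eq_of_nhds,
    prod_map_indexWord, mul_one, mul_assoc, mul_comm (∏ j, θ j ^ α j)]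

end DiffOp

/-! ### Consequence of the estimate -/

lemma nonpos_of_rpow_isBigO_one {x : ℝ} (h : (fun s : ℝ => s ^ x) =O[atTop] fun _ => (1 : ℝ)) :
    x ≤ 0 := by
  by_contra! hx
  exact not_isBoundedUnder_of_tendsto_atTop
    ((tendsto_rpow_atTop hx).congr' <| (eventually_gt_atTop 0).mono fun s hs =>
      (Real.norm_of_nonneg (Real.rpow_nonneg hs.le x)).symm) ((isBigO_one_iff ℝ).1 h)

lemma rpow_mul_sq_mul_pow {s τ₀ : ℝ} (hs : 0 < s) (hτ₀ : 0 < τ₀) (m k : ℕ) (δ : ℝ) :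
    (τ₀ * s ^ 2) ^ ((m : ℝ) - 1 - k + δ) * s ^ (2 * k) =
      τ₀ ^ ((m : ℝ) - 1 - k + δ) * s ^ (2 * δ) * (s ^ (2 * m) * s⁻¹ ^ 2) := by
  rw [Real.mul_rpow hτ₀.le (by positivity), ← Real.rpow_natCast s 2, ← Real.rpow_mul hs.le,
    ← Real.rpow_natCast s (2 * k), ← Real.rpow_natCast s (2 * m), inv_pow,
    ← Real.rpow_natCast s 2, ← Real.rpow_neg hs.le, mul_assoc, mul_assoc, ← Real.rpow_add hs,
    ← Real.rpow_add hs, ← Real.rpow_add hs]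
  push_cast
  ring_nf

lemma nonpos_of_isBigO {τ₀ δ : ℝ} (hτ₀ : 0 < τ₀) {m k : ℕ} {w : ℝ → ℝ} (hw : ∀ s, w s ≠ 0)
    (h : (fun s => (τ₀ * s ^ 2) ^ ((m : ℝ) - 1 - k + δ) * (w s * s ^ (2 * k))) =O[atTop]
      fun s => w s * (s ^ (2 * m) * s⁻¹ ^ 2)) : δ ≤ 0 := by
  have hdiv := h.mul (isBigO_refl (fun s => (w s * (s ^ (2 * m) * s⁻¹ ^ 2))⁻¹) atTop)
  have hrpow : (fun s => τ₀ ^ ((m : ℝ) - 1 - k + δ) * s ^ (2 * δ)) =O[atTop]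
      fun _ => (1 : ℝ) := by
    refine hdiv.congr' ?_ ?_ <;> filter_upwards [eventually_gt_atTop 0] with s hs
    · rw [mul_left_comm, rpow_mul_sq_mul_pow hs hτ₀]
      field_simp [hw s]
    · exact mul_inv_cancel₀ (mul_ne_zero (hw s) (by positivity))
  have hδ := nonpos_of_rpow_isBigO_one
    ((isBigO_const_mul_left_iff (Real.rpow_pos_of_pos hτ₀ _).ne').1 hrpow)
  linarith

lemma exists_contDiff_cutoff (E : Type*) [NormedAddCommGroup E] [NormedSpace ℝ E]
    [HasContDiffBump E] {r R : ℝ} (hr : 0 ≤ r) (hrR : r < R) :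
    ∃ χ : E → ℂ, ContDiff ℝ ∞ χ ∧ support χ ⊆ Metric.closedBall 0 R ∧
      ∀ y ∈ Metric.closedBall 0 r, χ =ᶠ[𝓝 y] fun _ => 1 := by
  obtain ⟨t, hrt, htR⟩ := exists_between hrR
  let bump : ContDiffBump (0 : E) := ⟨t, R, hr.trans_lt hrt, htR⟩
  refine ⟨fun y => bump y, ofRealCLM.contDiff.comp bump.contDiff, fun y hy => ?_, fun y hy => ?_⟩
  · rw [mem_support, ofReal_ne_zero, ← mem_support, bump.support_eq] at hy
    exact Metric.ball_subset_closedBall hy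
  · filter_upwards [bump.eventuallyEq_one_of_mem_ball
      (Metric.closedBall_subset_ball hrt hy)] with z hz
    simp [hz]

theorem stmt0_general {N m : ℕ} {ι : Type*} [Fintype ι] {e : ι → Fin N → ℕ}
    {a : ι → (Fin N → ℝ) → ℂ} {z₀ : Fin N → ℝ} {θ : Fin N → ℂ} {φ : (Fin N → ℝ) → ℝ}
    {Z : Set (Fin N → ℝ)} {p : ℝ≥0∞} {C : ℝ≥0} {τ₀ δ : ℝ} {α₀ : Fin N → ℕ}
    (hZ : Z ∈ 𝓝 z₀) (ha : ∀ i, ContDiffAt ℝ 2 (a i) z₀) (hφ : ContDiffAt ℝ 2 φ z₀) (hp : p ≠ 0)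
    (hcarl : ∀ᶠ τ : ℝ in atTop, ∀ u : (Fin N → ℝ) → ℂ,
      ContDiff ℝ ∞ u → HasCompactSupport u → tsupport u ⊆ Z →
      ENNReal.ofReal (τ ^ ((m : ℝ) - 1 - (∑ j, α₀ j : ℕ) + δ)) *
          eLpNorm (fun z => (Real.exp (τ * φ z) : ℂ) * DopC α₀ u z) p volume ≤
        C * eLpNorm (fun z => (Real.exp (τ * φ z) : ℂ) * diffOp m e a u z) p volume)
    (hτ₀ : 0 < τ₀) (hθ : ∀ j, (θ j).im = τ₀ * fderiv ℝ φ z₀ (Pi.single j 1))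
    (hθα₀ : ∏ j, θ j ^ α₀ j ≠ 0) (hq : principalSymbol m e a z₀ θ = 0)
    (hdz : ∀ j, fderiv ℝ (fun z => principalSymbol m e a z θ) z₀ (Pi.single j 1) = 0)
    (hdζ : ∀ j, deriv (fun t => principalSymbol m e a z₀ (update θ j t)) (θ j) = 0) :
    δ ≤ 0 := by
  obtain ⟨χ, hχ, hχ_supp, hχ_one⟩ :=
    exists_contDiff_cutoff (Fin N → ℝ) (zero_le_one (α := ℝ)) one_lt_two
  have hsupp : ∀ᶠ s : ℝ in atTop,
      tsupport (wavePacket θ z₀ s χ) ⊆ Metric.closedBall z₀ (2 * s⁻¹) :=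
    (eventually_gt_atTop 0).mono fun s hs => tsupport_wavePacket_subset θ z₀ hs hχ_supp
  have hsuppZ : ∀ᶠ s : ℝ in atTop, Metric.closedBall z₀ (2 * s⁻¹) ⊆ Z :=
    eventually_shrinkingBalls.1 ((tendsto_snd_shrinkingBalls z₀ 2).eventually hZ)
  have hτ : Tendsto (fun s : ℝ => τ₀ * s ^ 2) atTop atTop :=
    (tendsto_pow_atTop two_ne_zero).const_mul_atTop hτ₀
  refine nonpos_of_isBigO hτ₀ (w := fun s => Real.exp (τ₀ * s ^ 2 * φ z₀))
    (fun s => (Real.exp_pos _).ne')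
    (isBigO_of_enorm_mul_eLpNorm_le (μ := volume) (C := C)
      (u := fun s z => (Real.exp (τ₀ * s ^ 2 * φ z) : ℂ) * DopC α₀ (wavePacket θ z₀ s χ) z)
      (v := fun s z => (Real.exp (τ₀ * s ^ 2 * φ z) : ℂ) * diffOp m e a (wavePacket θ z₀ s χ) z)
      hp one_pos zero_le_two ENNReal.coe_ne_top
      (isBigO_exp_mul_DopC_wavePacket hχ hχ_one hφ hθ hθα₀)
      (isBigO_exp_mul_diffOp_wavePacket 2 hχ ha hφ hθ hq hdz hdζ) ?_ ?_)
  · filter_upwards [hsupp] with s hs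
    exact ((support_mul_subset_right _ _).trans (support_diffOp_subset m e a _)).trans hs
  · filter_upwards [hsupp, hsuppZ, hτ.eventually hcarl, eventually_gt_atTop 0]
      with s hs hsZ hcarl hs0
    rw [Real.enorm_of_nonneg (by positivity)]
    exact hcarl _ (contDiff_wavePacket θ z₀ s hχ)
      (HasCompactSupport.of_support_subset_isCompact (isCompact_closedBall z₀ _)
        ((subset_tsupport _).trans hs)) (hs.trans hsZ)

end

/-- If the conjugated principal symbol `q(z, ζ + iτ∇φ(z))` vanishes to second order at a point
with `θ₀^{α₀} ≠ 0`, then a Carleman estimate of the given form forces `δ = 0`. -/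
theorem stmt0 (N m : ℕ) (hN : 1 ≤ N) (hm : 1 ≤ m)
    (Z : Set (Fin N → ℝ)) (hZopen : IsOpen Z)
    -- coefficients of Q, indexed by multi-indices α with entries ≤ m (covering all |α| ≤ m)
    (a : (Fin N → Fin (m + 1)) → (Fin N → ℝ) → ℂ)
    (ha : ∀ α, ContDiffOn ℝ (⊤ : ℕ∞) (a α) Z)
    (φ : (Fin N → ℝ) → ℝ) (hφ : ContDiffOn ℝ (⊤ : ℕ∞) φ Z)
    -- the operator Q u = ∑_{|α| ≤ m} a_α D^α u
    (Q : ((Fin N → ℝ) → ℂ) → ((Fin N → ℝ) → ℂ))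
    (hQ : ∀ u z, Q u z =
      ∑ α ∈ Finset.univ.filter (fun α : Fin N → Fin (m + 1) => (∑ j, (α j : ℕ)) ≤ m),
        a α z * DopC (fun j => (α j : ℕ)) u z)
    -- the principal symbol q(z,ζ) = ∑_{|α| = m} a_α(z) ζ^α, ζ ∈ ℂ^N
    (q : (Fin N → ℝ) → (Fin N → ℂ) → ℂ)
    (hq : ∀ z ζ, q z ζ =
      ∑ α ∈ Finset.univ.filter (fun α : Fin N → Fin (m + 1) => (∑ j, (α j : ℕ)) = m),
        a α z * ∏ j, ζ j ^ (α j : ℕ))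
    (C τ₁ : ℝ) (hC : 0 < C) (hτ₁ : 0 < τ₁)
    (α₀ : Fin N → Fin (m + 1)) (hα₀ : (∑ j, (α₀ j : ℕ)) ≤ m)
    (δ : ℝ) (hδ : 0 ≤ δ)
    -- the Carleman estimate
    (hcarl : ∀ τ : ℝ, τ₁ ≤ τ → ∀ u : (Fin N → ℝ) → ℂ,
      ContDiff ℝ (⊤ : ℕ∞) u → HasCompactSupport u → tsupport u ⊆ Z →
      ENNReal.ofReal (τ ^ ((m : ℝ) - 1 - ((∑ j, (α₀ j : ℕ) : ℕ) : ℝ) + δ)) *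
          eLpNorm (fun z => (Real.exp (τ * φ z) : ℂ) *
            DopC (fun j => (α₀ j : ℕ)) u z) 2 volume
        ≤ ENNReal.ofReal C *
          eLpNorm (fun z => (Real.exp (τ * φ z) : ℂ) * Q u z) 2 volume)
    -- the degenerate characteristic point
    (z₀ : Fin N → ℝ) (hz₀ : z₀ ∈ Z) (ζ₀ : Fin N → ℝ) (τ₀ : ℝ) (hτ₀ : 0 < τ₀)
    (θ₀ : Fin N → ℂ)
    (hθ₀ : θ₀ = fun j => (ζ₀ j : ℂ) +
      (τ₀ : ℂ) * Complex.I * ((fderiv ℝ φ z₀ (Pi.single j 1) : ℝ) : ℂ))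
    (hθ₀ne : (∏ j, θ₀ j ^ (α₀ j : ℕ)) ≠ 0)
    (hqzero : q z₀ θ₀ = 0)
    (hdz : ∀ j : Fin N, fderiv ℝ (fun z => q z θ₀) z₀ (Pi.single j 1) = 0)
    (hdζ : ∀ j : Fin N, deriv (fun t : ℂ => q z₀ (Function.update θ₀ j t)) (θ₀ j) = 0) :
    δ = 0 := by
  obtain rfl : Q = diffOp m (fun α j => (α j : ℕ)) a := funext₂ hQ
  obtain rfl : q = principalSymbol m (fun α j => (α j : ℕ)) a := funext₂ hq
  have hZ : Z ∈ nhds z₀ := hZopen.mem_nhds hz₀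
  have two_le_top : (2 : WithTop ℕ∞) ≤ (⊤ : ℕ∞) :=
    WithTop.coe_le_coe.2 (le_top : (2 : ℕ∞) ≤ ⊤)
  have him (j : Fin N) : (θ₀ j).im = τ₀ * fderiv ℝ φ z₀ (Pi.single j 1) := by simp [hθ₀]
  refine le_antisymm ?_ hδ
  exact stmt0_general (C := C.toNNReal) (p := 2) hZ
    (fun α => ((ha α).contDiffAt hZ).of_le two_le_top) ((hφ.contDiffAt hZ).of_le two_le_top)
    two_ne_zero ((Filter.eventually_ge_atTop τ₁).mono hcarl) hτ₀ him hθ₀ne hqzero hdz hdζ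
end

section
/- Let V ⊂ ℝ^N be open with closure V̄, let φ ∈ C^∞(ℝ^N;ℝ) satisfy |∇φ| ≥ c > 0 on V̄, and let p₁, p₂ : ℝ^N × ℂ^N → ℂ be polynomial in the second variable with coefficients smooth in the first (the principal symbols of two differential operators). For a symbol p set p_φ(z,ζ,τ) := p(z, ζ + iτ∇φ(z)). Assume the characteristic sets are disjoint: there is no (z,ζ,τ) ∈ V̄ × ℝ^N × [0,∞) with (ζ,τ) ≠ (0,0) and p₁_φ(z,ζ,τ) = p₂_φ(z,ζ,τ) = 0. Then the pair (p₁p₂, φ) satisfies the sub-ellipticity condition on V̄ if and only if both (p₁, φ) and (p₂, φ) satisfy it. -/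
/-- Poisson bracket `{f,g} = ∑_j (∂_{ζ_j} f ∂_{z_j} g − ∂_{z_j} f ∂_{ζ_j} g)` of real-valued
functions on phase space `ℝ^N × ℝ^N`. -/
noncomputable def poissonBracket {N : ℕ}
    (f g : ((Fin N → ℝ) × (Fin N → ℝ)) → ℝ) (w : (Fin N → ℝ) × (Fin N → ℝ)) : ℝ :=
  ∑ j : Fin N,
    (fderiv ℝ f w ((0 : Fin N → ℝ), Pi.single j 1) *
        fderiv ℝ g w (Pi.single j 1, (0 : Fin N → ℝ)) -
      fderiv ℝ f w (Pi.single j 1, (0 : Fin N → ℝ)) *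
        fderiv ℝ g w ((0 : Fin N → ℝ), Pi.single j 1))

/-- The conjugated symbol `p_φ(z,ζ,τ) = p(z, ζ + iτ∇φ(z))`. -/
noncomputable def conjSymb {N : ℕ} (p : (Fin N → ℝ) → (Fin N → ℂ) → ℂ)
    (φ : (Fin N → ℝ) → ℝ) (τ : ℝ) (w : (Fin N → ℝ) × (Fin N → ℝ)) : ℂ :=
  p w.1 (fun j => (w.2 j : ℂ) +
    (τ : ℂ) * Complex.I * ((fderiv ℝ φ w.1 (Pi.single j 1) : ℝ) : ℂ))

/-- The pair `(p, φ)` satisfies the sub-ellipticity condition on `S`. -/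
def SubEllipticOn {N : ℕ} (p : (Fin N → ℝ) → (Fin N → ℂ) → ℂ)
    (φ : (Fin N → ℝ) → ℝ) (S : Set (Fin N → ℝ)) : Prop :=
  ∀ z ∈ S, ∀ ζ : Fin N → ℝ, ∀ τ : ℝ, 0 < τ →
    conjSymb p φ τ (z, ζ) = 0 →
    0 < poissonBracket (fun w => (conjSymb p φ τ w).re)
      (fun w => (conjSymb p φ τ w).im) (z, ζ)

/-!
At a zero of `F` one has `d(FG) = G dF`. Since
`{Re F, Im F} = ∑ⱼ Im (conj (∂_{ζⱼ} F) ∂_{zⱼ} F)`, scaling `dF` by the complex number `G` scales the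
bracket by `|G|²`, so `{Re FG, Im FG} = |G|² {Re F, Im F}` there. Disjointness of the characteristic
sets makes the other factor nonzero at each zero of one factor, so the brackets of the product and
of the vanishing factor have the same sign.
-/

open scoped ComplexConjugate

section PoissonBracket

variable {N : ℕ} {F G : ((Fin N → ℝ) × (Fin N → ℝ)) → ℂ} {w : (Fin N → ℝ) × (Fin N → ℝ)}

theorem poissonBracket_re_im (hF : DifferentiableAt ℝ F w) :
    poissonBracket (fun w => (F w).re) (fun w => (F w).im) w =
      ∑ j, (conj (fderiv ℝ F w (0, Pi.single j 1)) * fderiv ℝ F w (Pi.single j 1, 0)).im := by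
  have fderiv_re : fderiv ℝ (fun w => (F w).re) w = Complex.reCLM.comp (fderiv ℝ F w) :=
    (Complex.reCLM.hasFDerivAt.comp w hF.hasFDerivAt).fderiv
  have fderiv_im : fderiv ℝ (fun w => (F w).im) w = Complex.imCLM.comp (fderiv ℝ F w) :=
    (Complex.imCLM.hasFDerivAt.comp w hF.hasFDerivAt).fderiv
  refine Finset.sum_congr rfl fun j _ => ?_
  simp only [fderiv_re, fderiv_im, ContinuousLinearMap.comp_apply, Complex.reCLM_apply,
    Complex.imCLM_apply, Complex.mul_im, Complex.conj_re, Complex.conj_im]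
  ring

theorem poissonBracket_re_im_mul_of_eq_zero (hF : DifferentiableAt ℝ F w)
    (hG : DifferentiableAt ℝ G w) (hF₀ : F w = 0) :
    poissonBracket (fun w => (F w * G w).re) (fun w => (F w * G w).im) w =
      Complex.normSq (G w) * poissonBracket (fun w => (F w).re) (fun w => (F w).im) w := by
  have fderiv_mul (v) : fderiv ℝ (fun w => F w * G w) w v = G w * fderiv ℝ F w v := by
    simp [fderiv_fun_mul hF hG, hF₀]
  have conj_mul_mul_mul (a b : ℂ) :
      conj (G w * a) * (G w * b) = (Complex.normSq (G w) : ℂ) * (conj a * b) := by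
    rw [map_mul, mul_mul_mul_comm, Complex.normSq_eq_conj_mul_self]
  simp only [poissonBracket_re_im (hF.fun_mul hG), poissonBracket_re_im hF, fderiv_mul,
    conj_mul_mul_mul, Complex.im_ofReal_mul, Finset.mul_sum]

theorem poissonBracket_re_im_mul_pos_iff (hF : DifferentiableAt ℝ F w)
    (hG : DifferentiableAt ℝ G w) (hF₀ : F w = 0) (hG₀ : G w ≠ 0) :
    0 < poissonBracket (fun w => (F w * G w).re) (fun w => (F w * G w).im) w ↔
      0 < poissonBracket (fun w => (F w).re) (fun w => (F w).im) w := by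
  rw [poissonBracket_re_im_mul_of_eq_zero hF hG hF₀,
    mul_pos_iff_of_pos_left (Complex.normSq_pos.2 hG₀)]

end PoissonBracket

section Differentiability

theorem differentiable_uncurry_of_eq_sum_mul_prod_pow {E ι κ : Type*} [NormedAddCommGroup E]
    [NormedSpace ℝ E] [Fintype ι] [Fintype κ] {p : E → (ι → ℂ) → ℂ} {a : κ → E → ℂ}
    {m : κ → ι → ℕ} (ha : ∀ α, Differentiable ℝ (a α))
    (hp : ∀ z ζ, p z ζ = ∑ α, a α z * ∏ j, ζ j ^ m α j) :
    Differentiable ℝ (Function.uncurry p) := by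
  simp only [Function.uncurry_def, hp]
  fun_prop

variable {N : ℕ} {φ : (Fin N → ℝ) → ℝ} {p : (Fin N → ℝ) → (Fin N → ℂ) → ℂ}

theorem differentiable_conjSymb (hφ : ContDiff ℝ 2 φ) (hp : Differentiable ℝ (Function.uncurry p))
    (τ : ℝ) : Differentiable ℝ (conjSymb p φ τ) := by
  have hshift : Differentiable ℝ fun w : (Fin N → ℝ) × (Fin N → ℝ) => fun j : Fin N =>
      (w.2 j : ℂ) + (τ : ℂ) * Complex.I * ((fderiv ℝ φ w.1 (Pi.single j 1) : ℝ) : ℂ) := by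
    fun_prop
  exact hp.comp (differentiable_fst.prodMk hshift)

end Differentiability

section SubElliptic

variable {N : ℕ} {φ : (Fin N → ℝ) → ℝ} {S : Set (Fin N → ℝ)}
  {p q p₁ p₂ : (Fin N → ℝ) → (Fin N → ℂ) → ℂ}

theorem conjSymb_mul (τ : ℝ) (w : (Fin N → ℝ) × (Fin N → ℝ)) :
    conjSymb (fun z ζ => p z ζ * q z ζ) φ τ w = conjSymb p φ τ w * conjSymb q φ τ w :=
  rfl

theorem subEllipticOn_iff_poissonBracket_mul_pos (hφ : ContDiff ℝ 2 φ)
    (hp : Differentiable ℝ (Function.uncurry p)) (hq : Differentiable ℝ (Function.uncurry q))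
    (hdisj : ∀ z ∈ S, ∀ ζ : Fin N → ℝ, ∀ τ : ℝ, 0 < τ →
      conjSymb p φ τ (z, ζ) = 0 → conjSymb q φ τ (z, ζ) ≠ 0) :
    SubEllipticOn p φ S ↔ ∀ z ∈ S, ∀ ζ : Fin N → ℝ, ∀ τ : ℝ, 0 < τ →
      conjSymb p φ τ (z, ζ) = 0 →
      0 < poissonBracket (fun w => (conjSymb p φ τ w * conjSymb q φ τ w).re)
        (fun w => (conjSymb p φ τ w * conjSymb q φ τ w).im) (z, ζ) := by
  refine forall₅_congr fun z hz ζ τ hτ => forall_congr' fun hzero => ?_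
  exact (poissonBracket_re_im_mul_pos_iff (differentiable_conjSymb hφ hp τ _)
    (differentiable_conjSymb hφ hq τ _) hzero (hdisj z hz ζ τ hτ hzero)).symm

theorem stmt4_general (hφ : ContDiff ℝ 2 φ)
    (hp₁ : Differentiable ℝ (Function.uncurry p₁)) (hp₂ : Differentiable ℝ (Function.uncurry p₂))
    (hdisj : ∀ z ∈ S, ∀ ζ : Fin N → ℝ, ∀ τ : ℝ, 0 < τ →
      ¬ (conjSymb p₁ φ τ (z, ζ) = 0 ∧ conjSymb p₂ φ τ (z, ζ) = 0)) :
    SubEllipticOn (fun z ζ => p₁ z ζ * p₂ z ζ) φ S ↔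
      SubEllipticOn p₁ φ S ∧ SubEllipticOn p₂ φ S := by
  have h₁ := subEllipticOn_iff_poissonBracket_mul_pos hφ hp₁ hp₂
    fun z hz ζ τ hτ hzero₁ hzero₂ => hdisj z hz ζ τ hτ ⟨hzero₁, hzero₂⟩
  have h₂ := subEllipticOn_iff_poissonBracket_mul_pos hφ hp₂ hp₁
    fun z hz ζ τ hτ hzero₂ hzero₁ => hdisj z hz ζ τ hτ ⟨hzero₁, hzero₂⟩
  simp only [mul_comm (conjSymb p₂ φ _ _)] at h₂
  rw [h₁, h₂]
  simp only [SubEllipticOn, conjSymb_mul, mul_eq_zero, or_imp, forall_and]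

end SubElliptic

/-- If the characteristic sets of the conjugated symbols `p₁_φ` and `p₂_φ` are disjoint on `V̄`,
then `(p₁p₂, φ)` is sub-elliptic on `V̄` iff both `(p₁, φ)` and `(p₂, φ)` are. -/
theorem stmt4 (N : ℕ) (hN : 1 ≤ N)
    (V : Set (Fin N → ℝ)) (hV : IsOpen V)
    (φ : (Fin N → ℝ) → ℝ) (hφ : ContDiff ℝ (⊤ : ℕ∞) φ)
    (c : ℝ) (hc : 0 < c)
    (hgrad : ∀ z ∈ closure V,
      c ≤ Real.sqrt (∑ j, (fderiv ℝ φ z (Pi.single j 1)) ^ 2))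
    (d₁ d₂ : ℕ)
    (a₁ : (Fin N → Fin (d₁ + 1)) → (Fin N → ℝ) → ℂ) (ha₁ : ∀ α, ContDiff ℝ (⊤ : ℕ∞) (a₁ α))
    (a₂ : (Fin N → Fin (d₂ + 1)) → (Fin N → ℝ) → ℂ) (ha₂ : ∀ α, ContDiff ℝ (⊤ : ℕ∞) (a₂ α))
    (p₁ p₂ : (Fin N → ℝ) → (Fin N → ℂ) → ℂ)
    (hp₁ : ∀ z ζ, p₁ z ζ = ∑ α : Fin N → Fin (d₁ + 1), a₁ α z * ∏ j, ζ j ^ (α j : ℕ))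
    (hp₂ : ∀ z ζ, p₂ z ζ = ∑ α : Fin N → Fin (d₂ + 1), a₂ α z * ∏ j, ζ j ^ (α j : ℕ))
    (hdisj : ∀ z ∈ closure V, ∀ ζ : Fin N → ℝ, ∀ τ : ℝ, 0 ≤ τ → ¬ (ζ = 0 ∧ τ = 0) →
      ¬ (conjSymb p₁ φ τ (z, ζ) = 0 ∧ conjSymb p₂ φ τ (z, ζ) = 0)) :
    SubEllipticOn (fun z ζ => p₁ z ζ * p₂ z ζ) φ (closure V) ↔
      (SubEllipticOn p₁ φ (closure V) ∧ SubEllipticOn p₂ φ (closure V)) := by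
  exact stmt4_general (mod_cast contDiff_infty.1 hφ 2)
    (differentiable_uncurry_of_eq_sum_mul_prod_pow (fun α => (ha₁ α).differentiable (by simp)) hp₁)
    (differentiable_uncurry_of_eq_sum_mul_prod_pow (fun α => (ha₂ α).differentiable (by simp)) hp₂)
    fun z hz ζ τ hτ => hdisj z hz ζ τ hτ.le fun h => hτ.ne' h.2
end

section
/- Let t ≥ 0 be a real number, let m ∈ ℂ, and let h ∈ ℂ satisfy h² = m and Re h ≥ 0. Set ρ₊ := −it + ih and ρ₋ := −it − ih (the two roots of the quadratic X ↦ (X + it)² + m), and set μ := 4t² Re m − 4t⁴ + (Im m)². Then: (i) Im ρ₋ ≤ −t ≤ Im ρ₊; (ii) the following are equivalent: ρ₋ = ρ₊; ρ₋ = ρ₊ = −it; m = 0; (iii) if moreover t > 0, then Im ρ₊ < 0 ⟺ μ < 0, Im ρ₊ = 0 ⟺ μ = 0, and Im ρ₊ > 0 ⟺ μ > 0. -/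
/-!
Taking imaginary parts, `Im ρ± = -t ± Re h`. The sign statement rests on the factorization
`μ = -4 (t² + (Im h)²) · Im ρ₊ · Im ρ₋`: for `t > 0` the sum of squares is positive and
`Im ρ₋ ≤ -t < 0`, so `μ` and `Im ρ₊` have the same sign.
-/

/-- The root `-it + ih` of `X ↦ (X + it)² + h²`. Negating `h` gives the other root, so that
`ρ₊ = quadRoot t h` and `ρ₋ = quadRoot t (-h)`. -/
noncomputable def quadRoot (t : ℝ) (h : ℂ) : ℂ :=
  -Complex.I * t + Complex.I * h

/-- The quantity `μ = 4t² Re m − 4t⁴ + (Im m)²` attached to `X ↦ (X + it)² + m`, whose sign, for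
`t > 0`, decides on which side of the real axis `ρ₊` lies. -/
def quadDiscr (t : ℝ) (m : ℂ) : ℝ :=
  4 * t ^ 2 * m.re - 4 * t ^ 4 + m.im ^ 2

section

variable {t : ℝ} {h : ℂ}

theorem quadRoot_zero (t : ℝ) : quadRoot t 0 = -Complex.I * t := by
  simp [quadRoot]

theorem quadRoot_injective (t : ℝ) : Function.Injective (quadRoot t) :=
  (add_right_injective _).comp (mul_right_injective₀ Complex.I_ne_zero)

theorem quadRoot_eq_neg_I_mul_iff : quadRoot t h = -Complex.I * t ↔ h = 0 := by
  rw [← quadRoot_zero, (quadRoot_injective t).eq_iff]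

theorem quadRoot_neg_eq_quadRoot_iff : quadRoot t (-h) = quadRoot t h ↔ h = 0 := by
  rw [(quadRoot_injective t).eq_iff, neg_eq_self]

theorem im_quadRoot (t : ℝ) (h : ℂ) : (quadRoot t h).im = -t + h.re := by
  simp [quadRoot]

theorem neg_le_im_quadRoot_iff : -t ≤ (quadRoot t h).im ↔ 0 ≤ h.re := by
  rw [im_quadRoot, le_add_iff_nonneg_right]

theorem im_quadRoot_neg_le_neg_iff : (quadRoot t (-h)).im ≤ -t ↔ 0 ≤ h.re := by
  rw [im_quadRoot, add_le_iff_nonpos_right, Complex.neg_re, neg_nonpos]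

theorem quadDiscr_sq (t : ℝ) (h : ℂ) :
    quadDiscr t (h ^ 2) =
      4 * (t ^ 2 + h.im ^ 2) * -(quadRoot t (-h)).im * (quadRoot t h).im := by
  simp only [quadDiscr, im_quadRoot, Complex.neg_re, pow_two h, Complex.mul_re, Complex.mul_im]
  ring

theorem sign_quadDiscr_sq (ht : t ≠ 0) (hneg : (quadRoot t (-h)).im < 0) :
    SignType.sign (quadDiscr t (h ^ 2)) = SignType.sign (quadRoot t h).im := by
  have factor_pos : 0 < 4 * (t ^ 2 + h.im ^ 2) * -(quadRoot t (-h)).im :=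
    mul_pos (by positivity) (neg_pos.mpr hneg)
  rw [quadDiscr_sq, sign_mul, sign_pos factor_pos, one_mul]

end

theorem stmt5_general (t : ℝ) (m h : ℂ) (hh : h ^ 2 = m) (hre : 0 ≤ h.re)
    (ρp ρm : ℂ)
    (hρp : ρp = -Complex.I * (t : ℂ) + Complex.I * h)
    (hρm : ρm = -Complex.I * (t : ℂ) - Complex.I * h)
    (μ : ℝ) (hμ : μ = 4 * t ^ 2 * m.re - 4 * t ^ 4 + m.im ^ 2) :
    (ρm.im ≤ -t ∧ -t ≤ ρp.im) ∧
    ((ρm = ρp ↔ (ρm = -Complex.I * (t : ℂ) ∧ ρp = -Complex.I * (t : ℂ))) ∧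
      (ρm = ρp ↔ m = 0)) ∧
    (0 < t →
      ((ρp.im < 0 ↔ μ < 0) ∧ (ρp.im = 0 ↔ μ = 0) ∧ (0 < ρp.im ↔ 0 < μ))) := by
  obtain rfl : ρp = quadRoot t h := hρp
  obtain rfl : ρm = quadRoot t (-h) := by rw [hρm, quadRoot, mul_neg, sub_eq_add_neg]
  obtain rfl : μ = quadDiscr t (h ^ 2) := by rw [hμ, hh, quadDiscr]
  have im_le : (quadRoot t (-h)).im ≤ -t := im_quadRoot_neg_le_neg_iff.mpr hre
  refine ⟨⟨im_le, neg_le_im_quadRoot_iff.mpr hre⟩, ⟨?_, ?_⟩, fun ht => ?_⟩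
  · rw [quadRoot_neg_eq_quadRoot_iff, quadRoot_eq_neg_I_mul_iff, quadRoot_eq_neg_I_mul_iff,
      neg_eq_zero, and_self]
  · rw [quadRoot_neg_eq_quadRoot_iff, ← hh, sq_eq_zero_iff]
  · have sign_eq := sign_quadDiscr_sq ht.ne' (im_le.trans_lt (neg_lt_zero.mpr ht))
    refine ⟨?_, ?_, ?_⟩
    · rw [← sign_eq_neg_one_iff, ← sign_eq, sign_eq_neg_one_iff]
    · rw [← sign_eq_zero_iff, ← sign_eq, sign_eq_zero_iff]
    · rw [← sign_eq_one_iff, ← sign_eq, sign_eq_one_iff]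

/-- Properties of the roots `ρ± = -it ± ih` of `X ↦ (X + it)² + m`, where `h² = m`,
`Re h ≥ 0`, and `μ = 4t² Re m − 4t⁴ + (Im m)²`. -/
theorem stmt5 (t : ℝ) (ht : 0 ≤ t) (m h : ℂ) (hh : h ^ 2 = m) (hre : 0 ≤ h.re)
    (ρp ρm : ℂ)
    (hρp : ρp = -Complex.I * (t : ℂ) + Complex.I * h)
    (hρm : ρm = -Complex.I * (t : ℂ) - Complex.I * h)
    (μ : ℝ) (hμ : μ = 4 * t ^ 2 * m.re - 4 * t ^ 4 + m.im ^ 2) :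
    (ρm.im ≤ -t ∧ -t ≤ ρp.im) ∧
    ((ρm = ρp ↔ (ρm = -Complex.I * (t : ℂ) ∧ ρp = -Complex.I * (t : ℂ))) ∧
      (ρm = ρp ↔ m = 0)) ∧
    (0 < t →
      ((ρp.im < 0 ↔ μ < 0) ∧ (ρp.im = 0 ↔ μ = 0) ∧ (0 < ρp.im ↔ 0 < μ))) :=
  stmt5_general t m h hh hre ρp ρm hρp hρm μ hμ
end

section
/- Let A ≥ 0, B ≥ 0 and C ≥ 0 with A ≤ B. Assume there exist τ₀ > 0, μ > 0 and ν > 0 such that A ≤ e^{−ντ} B + e^{μτ} C for all τ ≥ τ₀. Then A ≤ K B^{1−δ} C^{δ}, where K = max(2, e^{μτ₀}) and δ = ν/(ν+μ) ∈ (0,1). -/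
/-!
Write `G = B^{1-δ} C^δ`. For `B, C > 0` there is an `s` with `B = G e^{νs}` and
`C = G e^{-μs}`, so the two assumptions bound `A / G` by `e^{νs}` and, for every `τ ≥ τ₀`, by
`e^{-ν(τ-s)} + e^{μ(τ-s)}`. If `τ₀ ≤ s`, then `τ = s` gives `A / G ≤ 2`. Otherwise put
`L = log K`. Either `νs ≤ L` and the first bound suffices, or `τ = τ₀ = s + u` does: the second
bound is `e^L (e^{-x} + e^{-y})` with `x = L + νu`, `y = L - μu`, and `νs ≥ L ≥ μτ₀` forces
`xy ≥ L² ≥ (log 2)²`. Such `x, y` satisfy `e^{-x} + e^{-y} ≤ 1`, because `log p * log (1 - p)` is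
largest at `p = 1/2`.
-/

open Real Set Filter Topology

lemma mul_log_le_one_sub_mul_log_one_sub {p : ℝ} (hp : 0 < p) (hp_half : p ≤ 1 / 2) :
    p * log p ≤ (1 - p) * log (1 - p) := by
  have slope_le : slope log 1 (1 - p) ≤ slope log 1 p :=
    strictConcaveOn_log_Ioi.concaveOn.slope_anti (mem_Ioi.2 one_pos)
      ⟨hp, (by linarith : p < 1).ne⟩ ⟨(by linarith : 0 < 1 - p), (sub_lt_self 1 hp).ne⟩
      (by linarith)
  have div_le_div : -log (1 - p) / p ≤ -log p / (1 - p) := by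
    rwa [slope_def_field, slope_def_field, log_one, sub_zero, sub_zero, sub_sub_cancel_left,
      ← neg_sub 1 p, div_neg, div_neg, ← neg_div, ← neg_div] at slope_le
  rw [div_le_div_iff₀ hp (by linarith)] at div_le_div
  linarith

lemma hasDerivAt_log_mul_log_one_sub {p : ℝ} (hp : p ≠ 0) (hp_one : 1 - p ≠ 0) :
    HasDerivAt (fun p ↦ log p * log (1 - p)) (p⁻¹ * log (1 - p) + log p * (-1 / (1 - p))) p :=
  (hasDerivAt_log hp).mul (((hasDerivAt_id p).const_sub 1).log hp_one)

lemma monotoneOn_log_mul_log_one_sub :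
    MonotoneOn (fun p : ℝ ↦ log p * log (1 - p)) (Ioc 0 (1 / 2)) := by
  have hasDerivAt {p : ℝ} (hp : p ∈ Ioc (0 : ℝ) (1 / 2)) :=
    hasDerivAt_log_mul_log_one_sub hp.1.ne' (by linarith [hp.2] : 0 < 1 - p).ne'
  refine monotoneOn_of_hasDerivWithinAt_nonneg (convex_Ioc 0 (1 / 2))
    (fun p hp ↦ (hasDerivAt hp).continuousAt.continuousWithinAt)
    (fun p hp ↦ (hasDerivAt (interior_subset hp)).hasDerivWithinAt) fun p hp ↦ ?_
  obtain ⟨hp_pos, hp_half⟩ := interior_subset hp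
  have one_sub_pos : 0 < 1 - p := by linarith
  have deriv_eq : p⁻¹ * log (1 - p) + log p * (-1 / (1 - p)) =
      ((1 - p) * log (1 - p) - p * log p) / (p * (1 - p)) := by
    field_simp
    ring
  rw [deriv_eq]
  exact div_nonneg (sub_nonneg.2 (mul_log_le_one_sub_mul_log_one_sub hp_pos hp_half))
    (by positivity)

lemma log_mul_log_one_sub_le {p : ℝ} (hp : p ∈ Ioo 0 1) :
    log p * log (1 - p) ≤ log 2 ^ 2 := by
  wlog hp_half : p ≤ 1 / 2 generalizing p
  · have := this (p := 1 - p) ⟨by linarith [hp.2], by linarith [hp.1]⟩ (by linarith)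
    rwa [sub_sub_cancel, mul_comm] at this
  calc log p * log (1 - p) ≤ log (1 / 2) * log (1 - 1 / 2) :=
        monotoneOn_log_mul_log_one_sub ⟨hp.1, hp_half⟩ ⟨by norm_num, le_rfl⟩ hp_half
    _ = log 2 ^ 2 := by
        rw [sub_half, one_div, log_inv, neg_mul_neg, sq]

lemma exp_neg_add_exp_neg_le_one {x y : ℝ} (hx : 0 < x) (hxy : log 2 ^ 2 ≤ x * y) :
    exp (-x) + exp (-y) ≤ 1 := by
  have exp_neg_mem : exp (-x) ∈ Ioo 0 1 := ⟨exp_pos _, exp_lt_one_iff.2 (neg_neg_of_pos hx)⟩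
  have log_product : -x * log (1 - exp (-x)) ≤ x * y := by
    simpa only [log_exp] using (log_mul_log_one_sub_le exp_neg_mem).trans hxy
  have neg_y_le : -y ≤ log (1 - exp (-x)) := by
    refine neg_le.1 (le_of_mul_le_mul_left ?_ hx)
    linarith
  linarith [(le_log_iff_exp_le (sub_pos.2 exp_neg_mem.2)).1 neg_y_le]

lemma exp_neg_mul_add_exp_mul_le_exp {μ ν s u L : ℝ} (hμ : 0 ≤ μ) (hν : 0 ≤ ν) (hu : 0 ≤ u)
    (hL : log 2 ≤ L) (hμL : μ * (s + u) ≤ L) (hLν : L ≤ ν * s) :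
    exp (-ν * u) + exp (μ * u) ≤ exp L := by
  have log_two_pos : 0 < log 2 := log_pos one_lt_two
  have slack_nonneg : 0 ≤ L * (ν - μ) - μ * ν * u := by
    linarith [mul_le_mul_of_nonneg_left hμL hν, mul_le_mul_of_nonneg_left hLν hμ]
  have log_two_sq_le : log 2 ^ 2 ≤ (L + ν * u) * (L - μ * u) := calc
    log 2 ^ 2 ≤ L ^ 2 := by gcongr
    _ ≤ L ^ 2 + u * (L * (ν - μ) - μ * ν * u) := le_add_of_nonneg_right (by positivity)
    _ = (L + ν * u) * (L - μ * u) := by ring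
  have x_pos : 0 < L + ν * u := add_pos_of_pos_of_nonneg (log_two_pos.trans_le hL) (by positivity)
  calc exp (-ν * u) + exp (μ * u)
      = exp L * (exp (-(L + ν * u)) + exp (-(L - μ * u))) := by
        rw [mul_add, ← exp_add, ← exp_add]
        ring_nf
    _ ≤ exp L := mul_le_of_le_one_right (exp_pos L).le
        (exp_neg_add_exp_neg_le_one x_pos log_two_sq_le)

lemma le_max_mul_of_forall_le_exp_sub {A G s τ₀ μ ν : ℝ} (hG : 0 ≤ G) (hμ : 0 ≤ μ) (hν : 0 ≤ ν)
    (hA : A ≤ exp (ν * s) * G)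
    (hAτ : ∀ τ, τ₀ ≤ τ → A ≤ (exp (-ν * (τ - s)) + exp (μ * (τ - s))) * G) :
    A ≤ max 2 (exp (μ * τ₀)) * G := by
  set K := max 2 (exp (μ * τ₀))
  have K_pos : 0 < K := two_pos.trans_le (le_max_left _ _)
  suffices ∃ c ≤ K, A ≤ c * G by
    obtain ⟨c, hcK, hAc⟩ := this
    exact hAc.trans (mul_le_mul_of_nonneg_right hcK hG)
  rcases le_total τ₀ s with hs | hs
  · refine ⟨_, ?_, hAτ s hs⟩
    rw [sub_self, mul_zero, mul_zero, exp_zero, one_add_one_eq_two]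
    exact le_max_left _ _
  rcases le_total (ν * s) (log K) with hνs | hνs
  · exact ⟨_, (le_log_iff_exp_le K_pos).1 hνs, hA⟩
  · refine ⟨_, ?_, hAτ τ₀ le_rfl⟩
    rw [← exp_log K_pos]
    refine exp_neg_mul_add_exp_mul_le_exp hμ hν (sub_nonneg.2 hs)
      (log_le_log two_pos (le_max_left _ _)) ?_ hνs
    rw [add_sub_cancel]
    exact (le_log_iff_exp_le K_pos).2 (le_max_right _ _)

lemma exists_eq_exp_mul_rpow_mul_rpow {B C μ ν : ℝ} (hB : 0 < B) (hC : 0 < C) (hνμ : ν + μ ≠ 0) :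
    ∃ s, B = exp (ν * s) * (B ^ (1 - ν / (ν + μ)) * C ^ (ν / (ν + μ))) ∧
      C = exp (-μ * s) * (B ^ (1 - ν / (ν + μ)) * C ^ (ν / (ν + μ))) := by
  have G_eq : B ^ (1 - ν / (ν + μ)) * C ^ (ν / (ν + μ)) =
      exp (log B * (1 - ν / (ν + μ)) + log C * (ν / (ν + μ))) := by
    rw [rpow_def_of_pos hB, rpow_def_of_pos hC, exp_add]
  refine ⟨(log B - log C) / (ν + μ), ?_, ?_⟩
  · rw [G_eq, ← exp_add, ← log_injOn_pos.eq_iff hB (exp_pos _), log_exp]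
    field_simp
    ring
  · rw [G_eq, ← exp_add, ← log_injOn_pos.eq_iff hC (exp_pos _), log_exp]
    field_simp
    ring

lemma nonpos_of_forall_le_exp_neg_mul {A B τ₀ ν : ℝ} (hν : 0 < ν)
    (hA : ∀ τ, τ₀ ≤ τ → A ≤ exp (-ν * τ) * B) : A ≤ 0 := by
  have tendsto_zero : Tendsto (fun τ ↦ exp (-ν * τ) * B) atTop (𝓝 0) := by
    simpa using (tendsto_exp_atBot.comp
      (tendsto_id.const_mul_atTop_of_neg (neg_neg_of_pos hν))).mul_const B
  exact ge_of_tendsto tendsto_zero (eventually_atTop.2 ⟨τ₀, hA⟩)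

lemma le_max_mul_rpow_mul_rpow {A B C τ₀ μ ν : ℝ} (hB : 0 < B) (hC : 0 < C) (hAB : A ≤ B)
    (hμ : 0 < μ) (hν : 0 < ν)
    (hA : ∀ τ, τ₀ ≤ τ → A ≤ exp (-ν * τ) * B + exp (μ * τ) * C) :
    A ≤ max 2 (exp (μ * τ₀)) * (B ^ (1 - ν / (ν + μ)) * C ^ (ν / (ν + μ))) := by
  obtain ⟨s, hBs, hCs⟩ := exists_eq_exp_mul_rpow_mul_rpow hB hC (add_pos hν hμ).ne'
  have G_nonneg : 0 ≤ B ^ (1 - ν / (ν + μ)) * C ^ (ν / (ν + μ)) := by positivity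
  generalize B ^ (1 - ν / (ν + μ)) * C ^ (ν / (ν + μ)) = G at *
  refine le_max_mul_of_forall_le_exp_sub G_nonneg hμ.le hν.le (hAB.trans_eq hBs) fun τ hτ ↦ ?_
  calc A ≤ exp (-ν * τ) * B + exp (μ * τ) * C := hA τ hτ
    _ = (exp (-ν * (τ - s)) + exp (μ * (τ - s))) * G := by
      rw [hBs, hCs, ← mul_assoc, ← mul_assoc, ← exp_add, ← exp_add, ← add_mul]
      ring_nf

/-- Interpolation optimization lemma: if `A ≤ e^{−ντ} B + e^{μτ} C` for all `τ ≥ τ₀`,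
then `A ≤ K B^{1−δ} C^{δ}` with `K = max(2, e^{μτ₀})` and `δ = ν/(ν+μ) ∈ (0,1)`. -/
theorem stmt14 (A B C τ₀ μ ν : ℝ)
    (hA : 0 ≤ A) (hB : 0 ≤ B) (hC : 0 ≤ C) (hAB : A ≤ B)
    (hτ₀ : 0 < τ₀) (hμ : 0 < μ) (hν : 0 < ν)
    (hyp : ∀ τ : ℝ, τ₀ ≤ τ → A ≤ Real.exp (-ν * τ) * B + Real.exp (μ * τ) * C) :
    A ≤ max 2 (Real.exp (μ * τ₀)) * B ^ (1 - ν / (ν + μ)) * C ^ (ν / (ν + μ)) ∧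
      0 < ν / (ν + μ) ∧ ν / (ν + μ) < 1 := by
  have δ_pos : 0 < ν / (ν + μ) := by positivity
  have δ_lt_one : ν / (ν + μ) < 1 := (div_lt_one (add_pos hν hμ)).2 (lt_add_of_pos_right ν hμ)
  refine ⟨?_, δ_pos, δ_lt_one⟩
  rcases hB.eq_or_lt with rfl | B_pos
  · exact hAB.trans (by positivity)
  rcases hC.eq_or_lt with rfl | C_pos
  · simp only [mul_zero, add_zero] at hyp
    exact (nonpos_of_forall_le_exp_neg_mul hν hyp).trans (by positivity)
  rw [mul_assoc]
  exact le_max_mul_rpow_mul_rpow B_pos C_pos hAB hμ hν hyp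
end
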